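/- For every real number η > 1 there exists a constant C > 0, depending only on n, p, α, η, C₁ and C₂, with the following property: if u is a nonnegative C¹ solution of div A(x,Du) + b(x)|Du|^α ≥ q(x)g(u) in ℝⁿ, and τ > 1 and 0 < r₁ < r₂ are real numbers with r₂ ≤ τ·r₁ and 0 < M(r₁;u) ≤ η^{−1/2}·M(r₂;u), then at least one of the following two inequalities holds: (i) ∫_{M(r₁;u)}^{M(r₂;u)} (g_η(t)·t)^{−1/p} dt ≥ C·∫_{r₁}^{r₂} q_τ(ξ)^{1/p} dξ; (ii) ∫_{M(r₁;u)}^{M(r₂;u)} g_η(t)^{−1/α} dt ≥ C·∫_{r₁}^{r₂} (ξ·f_τ(ξ))^{1/(p−1)} dξ. -/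

import Mathlib

open MeasureTheory Metric Set Filter
open scoped RealInnerProductSpace ENNReal

noncomputable section

abbrev Euc (n : ℕ) := EuclideanSpace ℝ (Fin n)

/-- Weak solution of `div A(x,Dv) + b(x)|Dv|^α ≥ a(x)` on an open set `U`:
for every nonnegative test function `φ ∈ C₀^∞(U)`,
`-∫ A(x,Dv)·Dφ + ∫ b |Dv|^α φ ≥ ∫ a φ`. -/
def IsWeakSol {n : ℕ} (A : Euc n → Euc n → Euc n) (b : Euc n → ℝ) (α : ℝ)
    (a : Euc n → ℝ) (U : Set (Euc n)) (v : Euc n → ℝ) : Prop :=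
  ∀ φ : Euc n → ℝ, ContDiff ℝ (⊤ : ℕ∞) φ → HasCompactSupport φ → tsupport φ ⊆ U →
    (∀ x, 0 ≤ φ x) →
    (∫ x in U, a x * φ x) ≤
      (-(∫ x in U, ⟪A x (gradient v x), gradient φ x⟫)) +
        ∫ x in U, b x * ‖gradient v x‖ ^ α * φ x

/-- Structural conditions on `A`: measurability, coercivity and growth. -/
def StructCond {n : ℕ} (A : Euc n → Euc n → Euc n) (p C₁ C₂ : ℝ) : Prop :=
  Measurable (Function.uncurry A) ∧
    ∀ x ζ : Euc n, C₁ * ‖ζ‖ ^ p ≤ ⟪ζ, A x ζ⟫ ∧ ‖A x ζ‖ ≤ C₂ * ‖ζ‖ ^ (p - 1)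

/-- Locally bounded function on `ℝⁿ`. -/
def LocBdd {n : ℕ} (b : Euc n → ℝ) : Prop :=
  ∀ K : Set (Euc n), IsCompact K → ∃ C, ∀ x ∈ K, b x ≤ C

/-- `M(r; u) = max_{|x| = r} u x`. -/
def sphMax {n : ℕ} (u : Euc n → ℝ) (r : ℝ) : ℝ := sSup (u '' Metric.sphere (0 : Euc n) r)

/-- `g_θ(t) = inf_{s ∈ (t/θ, θ t)} g s`. -/
def ginf (g : ℝ → ℝ) (θ t : ℝ) : ℝ := sInf (g '' Set.Ioo (t / θ) (θ * t))

/-- The open annulus `{x : r₁ < |x| < r₂}`. -/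
def Ann (n : ℕ) (r₁ r₂ : ℝ) : Set (Euc n) := {x : Euc n | r₁ < ‖x‖ ∧ ‖x‖ < r₂}

/-- `q_σ(r) = ess inf_{r/σ < |x| < σ r} q x`. -/
def qinf {n : ℕ} (q : Euc n → ℝ) (σ r : ℝ) : ℝ :=
  essInf q (volume.restrict (Ann n (r / σ) (σ * r)))

/-- `f_σ(r) = q_σ(r) / (1 + r q_σ(r)^{(α-p+1)/α} ess sup_{r/σ<|x|<σr} b^{(p-1)/α})`. -/
def fdef {n : ℕ} (q b : Euc n → ℝ) (p α σ r : ℝ) : ℝ :=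
  qinf q σ r /
    (1 + r * qinf q σ r ^ ((α - p + 1) / α) *
      essSup (fun x => b x ^ ((p - 1) / α)) (volume.restrict (Ann n (r / σ) (σ * r))))


lemma dg_iter {γ : ℝ} (hγ : 1 < γ) (a : ℝ → ℝ) (ha : ∀ t, 0 ≤ a t) (t0 V L : ℝ) (hL : 0 ≤ L)
    (hV : 0 < V) (hanti : ∀ s t, t0 ≤ t → t ≤ s → a s ≤ a t)
    (hrec : ∀ s t, t0 ≤ t → t < s → a s ≤ (s - t) ^ (1 - 2 * γ) * (L * a t) ^ γ)
    (hsmall : L ^ γ * a t0 ^ (γ - 1) ≤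
      ((2 : ℝ) ^ (-(2 * γ - 1) / (γ - 1)) * 2 ^ (-(2 * γ - 1))) * V ^ (2 * γ - 1)) :
    a (t0 + V) = 0 := by
  set θ : ℝ := (2 : ℝ) ^ (-(2 * γ - 1) / (γ - 1)) with hθ
  have hθ0 : 0 < θ := by positivity
  have hθ1 : θ < 1 := by
    apply Real.rpow_lt_one_of_one_lt_of_neg (by norm_num)
    apply div_neg_of_neg_of_pos <;> linarith
  have hθp : θ ^ (γ - 1) = 2 ^ (-(2 * γ - 1)) := by
    rw [hθ, ← Real.rpow_mul (by norm_num)]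
    congr 1
    have : γ - 1 ≠ 0 := by linarith
    field_simp
  let s : ℕ → ℝ := fun j => t0 + V * (1 - (1/2) ^ j)
  have hsge : ∀ j, t0 ≤ s j := by
    intro j
    have : ((1:ℝ)/2) ^ j ≤ 1 := pow_le_one₀ (by norm_num) (by norm_num)
    have : 0 ≤ V * (1 - (1/2) ^ j) := mul_nonneg hV.le (by linarith)
    simp only [s]; linarith
  have hind : ∀ j, a (s j) ≤ a t0 * θ ^ j := by
    intro j
    induction j with
    | zero => simp [s]
    | succ j ih =>
      have hd : s (j+1) - s j = V * (1/2) ^ (j+1) := by simp only [s]; ring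
      have hpos : 0 < V * (1/2 : ℝ) ^ (j+1) := by positivity
      have h1 := hrec (s (j+1)) (s j) (hsge j) (by linarith)
      rw [hd] at h1
      have h2 : (L * a (s j)) ^ γ ≤ (L * (a t0 * θ ^ j)) ^ γ := by
        apply Real.rpow_le_rpow (mul_nonneg hL (ha _)) _ (by linarith)
        exact mul_le_mul_of_nonneg_left ih hL
      have h3 : a (s (j+1)) ≤ (V * (1/2) ^ (j+1)) ^ (1 - 2 * γ) * (L * (a t0 * θ ^ j)) ^ γ :=
        h1.trans (mul_le_mul_of_nonneg_left h2 (by positivity))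
      refine h3.trans ?_
      have ha0 := ha t0
      rw [Real.mul_rpow hV.le (by positivity), Real.mul_rpow hL (by positivity),
        Real.mul_rpow ha0 (by positivity)]
      have e1 : ((1/2 : ℝ) ^ (j+1)) ^ (1 - 2 * γ) = (2 : ℝ) ^ ((2 * γ - 1)) * (2 ^ (2*γ-1)) ^ j := by
        rw [← Real.rpow_natCast, ← Real.rpow_natCast, ← Real.rpow_mul (by norm_num),
          ← Real.rpow_mul (by norm_num), ← Real.rpow_add (by norm_num), one_div,
          Real.inv_rpow (by norm_num), ← Real.rpow_neg (by norm_num)]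
        congr 1; push_cast; ring
      have e2 : (θ ^ j) ^ γ = θ ^ j * (2 ^ (-(2 * γ - 1))) ^ j := by
        rw [← hθp, ← mul_pow]
        have : θ * θ ^ (γ - 1) = θ ^ γ := by
          nth_rewrite 1 [← Real.rpow_one θ]
          rw [← Real.rpow_add hθ0]; congr 1; ring
        rw [this, ← Real.rpow_natCast, ← Real.rpow_natCast, ← Real.rpow_mul hθ0.le,
          ← Real.rpow_mul hθ0.le, mul_comm]
      have e3 : a t0 ^ γ = a t0 * a t0 ^ (γ - 1) := by
        rcases ha0.eq_or_lt with h | h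
        · rw [← h]; rw [Real.zero_rpow (by linarith)]; simp
        · nth_rewrite 2 [← Real.rpow_one (a t0)]
          rw [← Real.rpow_add h]; congr 1; ring
      rw [e1, e2, e3]
      have e4 : ((2:ℝ) ^ (2*γ-1)) * (2 ^ (-(2 * γ - 1))) = 1 := by
        rw [← Real.rpow_add (by norm_num)]; simp
      have e5 : V ^ (1 - 2 * γ) * V ^ (2*γ-1) = 1 := by
        rw [← Real.rpow_add hV]; simp
      have e6 : ((2:ℝ) ^ (2*γ-1)) ^ j * (2 ^ (-(2 * γ - 1))) ^ j = 1 := by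
        rw [← mul_pow, e4, one_pow]
      calc V ^ (1 - 2 * γ) * (2 ^ (2 * γ - 1) * (2 ^ (2 * γ - 1)) ^ j) *
            (L ^ γ * (a t0 * a t0 ^ (γ - 1) * (θ ^ j * (2 ^ (-(2 * γ - 1))) ^ j)))
          = (V ^ (1 - 2 * γ) * 2 ^ (2 * γ - 1) * a t0 * θ ^ j) * (L ^ γ * a t0 ^ (γ - 1)) *
            (((2:ℝ) ^ (2*γ-1)) ^ j * (2 ^ (-(2 * γ - 1))) ^ j) := by ring
        _ = (V ^ (1 - 2 * γ) * 2 ^ (2 * γ - 1) * a t0 * θ ^ j) * (L ^ γ * a t0 ^ (γ - 1)) := by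
            rw [e6, mul_one]
        _ ≤ (V ^ (1 - 2 * γ) * 2 ^ (2 * γ - 1) * a t0 * θ ^ j) *
            ((θ * 2 ^ (-(2 * γ - 1))) * V ^ (2 * γ - 1)) := by
            apply mul_le_mul_of_nonneg_left hsmall
            positivity
        _ = a t0 * θ ^ j * θ * (V ^ (1 - 2 * γ) * V ^ (2*γ-1)) *
              (((2:ℝ) ^ (2*γ-1)) * (2 ^ (-(2 * γ - 1)))) := by ring
        _ = a t0 * θ ^ (j+1) := by rw [e4, e5]; ring
  have hle : ∀ j, a (t0 + V) ≤ a t0 * θ ^ j := by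
    intro j
    refine (hanti _ _ (hsge j) ?_).trans (hind j)
    have : 0 ≤ V * ((1/2) ^ j) := by positivity
    simp only [s]; linarith
  have hlim : Tendsto (fun j : ℕ => a t0 * θ ^ j) atTop (nhds (a t0 * 0)) :=
    (tendsto_pow_atTop_nhds_zero_of_lt_one hθ0.le hθ1).const_mul _
  rw [mul_zero] at hlim
  exact le_antisymm (ge_of_tendsto' hlim hle) (ha _)

lemma sob (n : ℕ) (hn : 2 ≤ n) : ∃ Cs : ℝ, 0 < Cs ∧ ∀ F : Euc n → ℝ, ContDiff ℝ 1 F →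
    HasCompactSupport F → (∀ x, 0 ≤ F x) →
    ∫ x, F x ^ ((n : ℝ) / (n - 1)) ≤ (Cs * ∫ x, ‖fderiv ℝ F x‖) ^ ((n : ℝ) / (n - 1)) := by
  set γ : ℝ := (n : ℝ) / (n - 1) with hγ
  have hn' : (2 : ℝ) ≤ n := by exact_mod_cast hn
  have hγ1 : 1 < γ := by rw [hγ, lt_div_iff₀] <;> linarith
  have hc : Real.HolderConjugate (Module.finrank ℝ (Euc n)) γ := by
    have : (Module.finrank ℝ (Euc n) : ℝ) = n := by simp
    rw [this, Real.holderConjugate_iff]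
    refine ⟨by linarith, ?_⟩
    have : (n : ℝ) ≠ 0 := by linarith
    rw [hγ]; field_simp; ring
  set c := lintegralPowLePowLIntegralFDerivConst (volume : Measure (Euc n)) γ with hcdef
  refine ⟨(c : ℝ) ^ (1 / γ) + 1, by positivity, ?_⟩
  intro F hF hFc hF0
  have key := lintegral_pow_le_pow_lintegral_fderiv (volume : Measure (Euc n)) hF hFc hc
  have hdc : Continuous (fderiv ℝ F) := hF.continuous_fderiv (by norm_num)
  have hdi : Integrable (fun x => ‖fderiv ℝ F x‖) :=
    (hdc.norm).integrable_of_hasCompactSupport (hFc.fderiv ℝ).norm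
  have i1 : ∫⁻ x, ‖fderiv ℝ F x‖ₑ = ENNReal.ofReal (∫ x, ‖fderiv ℝ F x‖) := by
    rw [ofReal_integral_eq_lintegral_ofReal hdi (Eventually.of_forall fun x => norm_nonneg _)]
    simp
  have hcont : Continuous (fun x => F x ^ γ) := hF.continuous.rpow_const (fun x => Or.inr (by linarith))
  have i2 : ∫⁻ x, ‖F x‖ₑ ^ γ = ENNReal.ofReal (∫ x, F x ^ γ) := by
    rw [ofReal_integral_eq_lintegral_ofReal]
    · congr 1; ext x
      rw [← ENNReal.ofReal_rpow_of_nonneg (hF0 x) (by linarith)]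
      rw [Real.enorm_of_nonneg (hF0 x)]
    · apply hcont.integrable_of_hasCompactSupport
      exact hFc.comp_left (g := fun y : ℝ => y ^ γ) (Real.zero_rpow (by linarith))
    · exact Eventually.of_forall fun x => Real.rpow_nonneg (hF0 x) _
  rw [i1, i2] at key
  have hI : 0 ≤ ∫ x, ‖fderiv ℝ F x‖ := integral_nonneg fun x => norm_nonneg _
  rw [ENNReal.ofReal_rpow_of_nonneg hI (by linarith)] at key
  have e : ((c : ℝ≥0∞)) = ENNReal.ofReal (c : ℝ) := by simp
  rw [← hcdef, e, ← ENNReal.ofReal_mul (by positivity), ENNReal.ofReal_le_ofReal_iff (by positivity)] at key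
  refine key.trans ?_
  rw [Real.mul_rpow (by positivity) hI]
  apply mul_le_mul_of_nonneg_right _ (by positivity)
  calc (c : ℝ) = ((c : ℝ) ^ (1 / γ)) ^ γ := by
        rw [← Real.rpow_mul (by positivity), one_div, inv_mul_cancel₀ (by linarith), Real.rpow_one]
    _ ≤ _ := by
        apply Real.rpow_le_rpow (by positivity) (by linarith) (by linarith)

lemma dg (n : ℕ) (hn : 2 ≤ n) : ∃ θ : ℝ, 0 < θ ∧ ∀ (w : Euc n → ℝ) (S : Set (Euc n)),
    Continuous w → HasCompactSupport w → (∀ x, 0 ≤ w x) → MeasurableSet S →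
    ∀ Λ t0 V : ℝ, 0 ≤ Λ → 0 ≤ t0 → 0 < V →
    (∀ t, t0 ≤ t → ContDiff ℝ 1 (fun x => (max (w x - t) 0) ^ 2) ∧
      ∫ x, ‖fderiv ℝ (fun x => (max (w x - t) 0) ^ 2) x‖ ≤ Λ * ∫ x in S, max (w x - t) 0) →
    Λ ^ ((n : ℝ) / (n - 1)) * (∫ x in S, max (w x - t0) 0) ^ ((n : ℝ) / (n - 1) - 1) ≤
      θ * V ^ (2 * ((n : ℝ) / (n - 1)) - 1) →
    ∀ x, w x ≤ t0 + V := by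
  obtain ⟨Cs, hCs, hsob⟩ := sob n hn
  set γ : ℝ := (n : ℝ) / (n - 1) with hγ
  have hn' : (2 : ℝ) ≤ n := by exact_mod_cast hn
  have hγ1 : 1 < γ := by rw [hγ, lt_div_iff₀] <;> linarith
  refine ⟨((2 : ℝ) ^ (-(2 * γ - 1) / (γ - 1)) * 2 ^ (-(2 * γ - 1))) / Cs ^ γ, by positivity, ?_⟩
  intro w S hw hwc hw0 hS Λ t0 V hΛ ht0 hV hen hsmall
  have hcs : ∀ t, 0 ≤ t → HasCompactSupport (fun x => max (w x - t) 0) := fun t ht =>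
    hwc.comp_left (g := fun y : ℝ => max (y - t) 0) (by simp [ht])
  have hcs2 : ∀ t, 0 ≤ t → HasCompactSupport (fun x => (max (w x - t) 0) ^ 2) := fun t ht =>
    hwc.comp_left (g := fun y : ℝ => (max (y - t) 0) ^ 2) (by simp [ht])
  have hct : ∀ t, Continuous (fun x => max (w x - t) 0) := fun t => by fun_prop
  have hIntg : ∀ t, 0 ≤ t → Integrable (fun x => max (w x - t) 0) := fun t ht =>
    (hct t).integrable_of_hasCompactSupport (hcs t ht)
  set a : ℝ → ℝ := fun t => ∫ x in S, max (w x - t) 0 with ha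
  have ha0 : ∀ t, 0 ≤ a t := fun t => integral_nonneg fun x => le_max_right _ _
  have hS1 : ∀ t, t0 ≤ t → ∫ x, ((max (w x - t) 0) ^ 2) ^ γ ≤ (Cs * (Λ * a t)) ^ γ := by
    intro t ht
    refine (hsob _ (hen t ht).1 (hcs2 t (ht0.trans ht)) (fun x => by positivity)).trans ?_
    apply Real.rpow_le_rpow _ _ (by linarith)
    · exact mul_nonneg hCs.le (integral_nonneg fun x => norm_nonneg _)
    · exact mul_le_mul_of_nonneg_left (hen t ht).2 hCs.le
  have hcγ : ∀ t, Continuous (fun x => ((max (w x - t) 0) ^ 2) ^ γ) := fun t =>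
    ((hct t).pow 2).rpow_const (fun x => Or.inr (by linarith))
  have hiγ : ∀ t, 0 ≤ t → Integrable (fun x => ((max (w x - t) 0) ^ 2) ^ γ) := fun t ht =>
    (hcγ t).integrable_of_hasCompactSupport
      ((hcs2 t ht).comp_left (g := fun y : ℝ => y ^ γ) (Real.zero_rpow (by linarith)))
  have hav : a (t0 + V) = 0 := by
    apply dg_iter hγ1 a ha0 t0 V (Cs * Λ) (by positivity) hV
    · intro s t ht hts
      apply integral_mono (hIntg s (by linarith)).integrableOn (hIntg t (by linarith)).integrableOn
      intro x
      exact max_le_max (by linarith) le_rfl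
    · intro s t ht hts
      have hst : 0 < s - t := by linarith
      have h1 : a s ≤ ∫ x, (s - t) ^ (1 - 2 * γ) * ((max (w x - t) 0) ^ 2) ^ γ := by
        refine (setIntegral_le_integral (hIntg s (by linarith))
          (Eventually.of_forall fun x => le_max_right _ _)).trans ?_
        apply integral_mono (hIntg s (by linarith)) ((hiγ t (by linarith)).const_mul _)
        intro x
        by_cases hx : w x ≤ s
        · have : max (w x - s) 0 = 0 := max_eq_right (by linarith)
          simp only [this]; positivity
        · push Not at hx
          have e1 : max (w x - s) 0 = w x - s := max_eq_left (by linarith)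
          have e2 : max (w x - t) 0 = w x - t := max_eq_left (by linarith)
          simp only [e1, e2]
          have hy : 0 < w x - t := by linarith
          have e3 : ((w x - t) ^ 2) ^ γ = (w x - t) ^ (2 * γ - 1) * (w x - t) := by
            rw [← Real.rpow_natCast, ← Real.rpow_mul hy.le]
            nth_rewrite 3 [← Real.rpow_one (w x - t)]
            rw [← Real.rpow_add hy]; congr 1; push_cast; ring
          have e4 : (s - t) ^ (1 - 2 * γ) = ((s - t) ^ (2 * γ - 1))⁻¹ := by
            rw [← Real.rpow_neg hst.le]; congr 1; ring
          rw [e3, e4]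
          have h5 : (s - t) ^ (2 * γ - 1) ≤ (w x - t) ^ (2 * γ - 1) :=
            Real.rpow_le_rpow hst.le (by linarith) (by linarith)
          have h6 : 0 < (s - t) ^ (2 * γ - 1) := by positivity
          rw [← mul_assoc]
          have h7 : 1 ≤ ((s - t) ^ (2 * γ - 1))⁻¹ * (w x - t) ^ (2 * γ - 1) := by
            rw [inv_mul_eq_div, le_div_iff₀ h6]; linarith
          nlinarith
      rw [integral_const_mul] at h1
      refine h1.trans (mul_le_mul_of_nonneg_left ?_ (by positivity))
      have := hS1 t ht
      rwa [← mul_assoc] at this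
    · rw [Real.mul_rpow hCs.le hΛ, mul_assoc]
      calc Cs ^ γ * (Λ ^ γ * a t0 ^ (γ - 1)) ≤ Cs ^ γ * (((2 : ℝ) ^ (-(2 * γ - 1) / (γ - 1)) * 2 ^ (-(2 * γ - 1))) / Cs ^ γ * V ^ (2 * γ - 1)) :=
            mul_le_mul_of_nonneg_left hsmall (by positivity)
        _ = _ := by
            have : Cs ^ γ ≠ 0 := by positivity
            field_simp
  have h2 := hS1 (t0 + V) (by linarith)
  rw [hav, mul_zero, mul_zero, Real.zero_rpow (by linarith)] at h2
  have h3 : (fun x => ((max (w x - (t0 + V)) 0) ^ 2) ^ γ) =ᵐ[volume] 0 := by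
    rw [← integral_eq_zero_iff_of_nonneg (fun x => by positivity) (hiγ _ (by linarith))]
    exact le_antisymm h2 (integral_nonneg fun x => by positivity)
  have h4 : (fun x => ((max (w x - (t0 + V)) 0) ^ 2) ^ γ) = 0 :=
    (Continuous.ae_eq_iff_eq volume (hcγ _) continuous_const).1 h3
  intro x
  have h5 := congrFun h4 x
  by_contra hx
  push Not at hx
  have : 0 < max (w x - (t0 + V)) 0 := lt_max_of_lt_left (by linarith)
  have h6 : 0 < ((max (w x - (t0 + V)) 0) ^ 2) ^ γ := by positivity
  simp only [Pi.zero_apply] at h5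
  linarith


lemma norm_gradient_eq {n : ℕ} (f : Euc n → ℝ) (x : Euc n) : ‖gradient f x‖ = ‖fderiv ℝ f x‖ := by
  simp [gradient]

lemma gradient_sub_eq {n : ℕ} (f g : Euc n → ℝ) (x : Euc n) :
    ‖gradient f x - gradient g x‖ = ‖fderiv ℝ f x - fderiv ℝ g x‖ := by
  rw [gradient, gradient, ← map_sub, LinearIsometryEquiv.norm_map]

lemma continuous_gradient {n : ℕ} {f : Euc n → ℝ} (hf : ContDiff ℝ 1 f) :
    Continuous (gradient f) := by
  have := hf.continuous_fderiv (by norm_num)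
  unfold gradient
  fun_prop

lemma moll {n : ℕ} (φ : Euc n → ℝ) (hφ : ContDiff ℝ 1 φ) (hc : HasCompactSupport φ)
    (h0 : ∀ x, 0 ≤ φ x) (R : ℝ) (hR : ∀ x, R < ‖x‖ → φ x = 0) (ε : ℝ) (hε : 0 < ε) :
    ∃ ψ : Euc n → ℝ, ContDiff ℝ (⊤ : ℕ∞) ψ ∧ HasCompactSupport ψ ∧ (∀ x, 0 ≤ ψ x) ∧
      (∀ x, R + 1 < ‖x‖ → ψ x = 0) ∧ (∀ x, |ψ x - φ x| ≤ ε) ∧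
      (∀ x, ‖gradient ψ x - gradient φ x‖ ≤ ε) := by
  have hu1 : UniformContinuous φ := hφ.continuous.uniformContinuous_of_tendsto_cocompact
    (hc.is_zero_at_infty)
  have hdc : Continuous (fderiv ℝ φ) := hφ.continuous_fderiv (by norm_num)
  have hu2 : UniformContinuous (fderiv ℝ φ) := hdc.uniformContinuous_of_tendsto_cocompact
    ((hc.fderiv ℝ).is_zero_at_infty)
  obtain ⟨d1, hd1, h1⟩ := Metric.uniformContinuous_iff.1 hu1 ε hε
  obtain ⟨d2, hd2, h2⟩ := Metric.uniformContinuous_iff.1 hu2 ε hε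
  set d := min 1 (min d1 d2) with hd
  have hd0 : 0 < d := by positivity
  let β : ContDiffBump (0 : Euc n) := ⟨d / 2, d, half_pos hd0, half_lt_self hd0⟩
  have hrO : β.rOut = d := rfl
  set ψ : Euc n → ℝ := (convolution (β.normed volume) φ (ContinuousLinearMap.lsmul ℝ ℝ) volume)
    with hψ
  have hz : ∀ x, R + 1 < ‖x‖ → ψ x = 0 := by
    intro x hx
    have := β.dist_normed_convolution_le (μ := volume) (g := φ) (x₀ := x) (ε := 0)
      hφ.continuous.aestronglyMeasurable (by
        intro y hy
        rw [hrO, mem_ball, dist_eq_norm] at hy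
        have hy1 : ‖y - x‖ < 1 := hy.trans_le (min_le_left _ _)
        have hx' : ‖x‖ ≤ ‖y‖ + ‖y - x‖ := by
          have := norm_sub_norm_le x y
          rw [norm_sub_rev] at this; linarith
        rw [hR y (by linarith), hR x (by linarith)]; simp)
    rw [hR x (by linarith)] at this
    exact dist_le_zero.1 this
  have hψ0 : ∀ x, 0 ≤ ψ x := by
    intro x
    apply integral_nonneg
    intro t
    exact mul_nonneg (β.nonneg_normed t) (h0 _)
  refine ⟨ψ, ?_, ?_, hψ0, hz, ?_, ?_⟩
  · exact β.hasCompactSupport_normed.contDiff_convolution_left _ β.contDiff_normed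
      (hφ.continuous.locallyIntegrable)
  · apply HasCompactSupport.intro (isCompact_closedBall (0 : Euc n) (R + 1))
    intro x hx
    apply hz
    simpa using hx
  · intro x
    rw [← Real.dist_eq]
    apply β.dist_normed_convolution_le (μ := volume) (g := φ) (x₀ := x) (ε := ε)
      hφ.continuous.aestronglyMeasurable
    intro y hy
    exact (h1 (hy.trans_le ((min_le_right _ _).trans (min_le_left _ _)))).le
  · intro x
    rw [gradient_sub_eq]
    have hfd := hc.hasFDerivAt_convolution_right (ContinuousLinearMap.lsmul ℝ ℝ)
      (β.continuous_normed (μ := volume)).locallyIntegrable hφ x (μ := volume)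
    rw [hfd.fderiv]
    have e : (convolution (β.normed volume) (fderiv ℝ φ)
        ((ContinuousLinearMap.lsmul ℝ ℝ : ℝ →L[ℝ] ℝ →L[ℝ] ℝ).precompR (Euc n)) volume) x =
        (convolution (β.normed volume) (fderiv ℝ φ)
        (ContinuousLinearMap.lsmul ℝ ℝ) volume) x := by
      rw [convolution_def, convolution_def]
      rfl
    rw [e, ← dist_eq_norm]
    apply β.dist_normed_convolution_le (μ := volume) (g := fderiv ℝ φ) (x₀ := x) (ε := ε)
      hdc.aestronglyMeasurable
    intro y hy
    exact (h2 (hy.trans_le ((min_le_right _ _).trans (min_le_right _ _)))).le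

lemma int_mul {n : ℕ} {a : Euc n → ℝ} (ha : LocallyIntegrable a) {φ : Euc n → ℝ}
    (hφ : Continuous φ) (hc : HasCompactSupport φ) : Integrable (fun x => a x * φ x) := by
  have := ha.integrable_smul_right_of_hasCompactSupport hφ hc
  simpa [smul_eq_mul] using this

lemma int_inner {n : ℕ} {Z : Euc n → Euc n} (hZ : LocallyIntegrable Z) {φ : Euc n → Euc n}
    (hφ : Continuous φ) (hc : HasCompactSupport φ) : Integrable (fun x => ⟪Z x, φ x⟫) := by
  have h1 : Integrable (fun x => ‖φ x‖ • Z x) :=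
    hZ.integrable_smul_left_of_hasCompactSupport hφ.norm hc.norm
  have hm : AEStronglyMeasurable Z volume := hZ.aestronglyMeasurable
  refine h1.mono (hm.inner hφ.aestronglyMeasurable) (Eventually.of_forall fun x => ?_)
  rw [norm_smul, norm_norm, mul_comm]
  exact norm_inner_le_norm _ _

lemma hasCompactSupport_gradient {n : ℕ} {φ : Euc n → ℝ} (hc : HasCompactSupport φ) :
    HasCompactSupport (gradient φ) := by
  have := (hc.fderiv ℝ).comp_left (g := (InnerProductSpace.toDual ℝ (Euc n)).symm) (by simp)
  exact this

lemma weak_ext {n : ℕ} (a c : Euc n → ℝ) (Z : Euc n → Euc n) (ha : LocallyIntegrable a)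
    (hcI : LocallyIntegrable c) (hZ : LocallyIntegrable Z)
    (hw : ∀ φ : Euc n → ℝ, ContDiff ℝ (⊤ : ℕ∞) φ → HasCompactSupport φ → (∀ x, 0 ≤ φ x) →
      ∫ x, a x * φ x ≤ -(∫ x, ⟪Z x, gradient φ x⟫) + ∫ x, c x * φ x)
    (φ : Euc n → ℝ) (hφ : ContDiff ℝ 1 φ) (hφc : HasCompactSupport φ) (h0 : ∀ x, 0 ≤ φ x) :
    ∫ x, (a x * φ x + ⟪Z x, gradient φ x⟫ - c x * φ x) ≤ 0 := by
  obtain ⟨R, hR⟩ : ∃ R : ℝ, ∀ x, R < ‖x‖ → φ x = 0 := by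
    obtain ⟨R, hR⟩ := hφc.isCompact.isBounded.exists_norm_le
    refine ⟨R, fun x hx => ?_⟩
    by_contra h
    have := hR x (subset_tsupport _ h)
    linarith
  set K := closedBall (0 : Euc n) (R + 1) with hK
  have hKm : MeasurableSet K := measurableSet_closedBall
  set I := ∫ x in K, (|a x| + ‖Z x‖ + |c x|) with hI
  have hI0 : 0 ≤ I := integral_nonneg fun x => by positivity
  have hIK : IntegrableOn (fun x => |a x| + ‖Z x‖ + |c x|) K := by
    have hk : IsCompact K := isCompact_closedBall _ _
    exact (((ha.integrableOn_isCompact hk).abs).add ((hZ.integrableOn_isCompact hk).norm)).add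
      ((hcI.integrableOn_isCompact hk).abs)
  have hall : ∀ φ : Euc n → ℝ, ContDiff ℝ 1 φ → HasCompactSupport φ →
      Integrable (fun x => a x * φ x) ∧ Integrable (fun x => ⟪Z x, gradient φ x⟫) ∧
      Integrable (fun x => c x * φ x) := fun φ h1 h2 =>
    ⟨int_mul ha h1.continuous h2, int_inner hZ (continuous_gradient h1)
      (hasCompactSupport_gradient h2), int_mul hcI h1.continuous h2⟩
  have main : ∀ ε : ℝ, 0 < ε → ∫ x, (a x * φ x + ⟪Z x, gradient φ x⟫ - c x * φ x) ≤ ε * I := by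
    intro ε hε
    obtain ⟨ψ, s1, s2, s3, s4, s5, s6⟩ := moll φ hφ hφc h0 R hR ε hε
    have hψ1 : ContDiff ℝ 1 ψ := s1.of_le (by exact_mod_cast le_top)
    obtain ⟨i1, i2, i3⟩ := hall φ hφ hφc
    obtain ⟨j1, j2, j3⟩ := hall ψ hψ1 s2
    have hwψ := hw ψ s1 s2 s3
    have e : ∫ x, (a x * ψ x + ⟪Z x, gradient ψ x⟫ - c x * ψ x) ≤ 0 := by
      rw [integral_sub (f := fun x => a x * ψ x + ⟪Z x, gradient ψ x⟫) (j1.add j2) j3,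
        integral_add j1 j2]; linarith
    have k1 : Integrable (fun x => a x * φ x + ⟪Z x, gradient φ x⟫ - c x * φ x) :=
      (i1.add i2).sub i3
    have k2 : Integrable (fun x => a x * ψ x + ⟪Z x, gradient ψ x⟫ - c x * ψ x) :=
      (j1.add j2).sub j3
    have hdiff : (∫ x, (a x * φ x + ⟪Z x, gradient φ x⟫ - c x * φ x)) -
        ∫ x, (a x * ψ x + ⟪Z x, gradient ψ x⟫ - c x * ψ x) ≤ ε * I := by
      rw [← integral_sub k1 k2, hI, ← integral_const_mul,
        ← integral_indicator hKm]
      apply integral_mono (k1.sub k2)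
        ((integrable_indicator_iff hKm).2 (hIK.const_mul ε))
      intro x
      rw [Pi.sub_apply]
      by_cases hx : x ∈ K
      · simp only [indicator_of_mem hx]
        have t1 := abs_le.1 (s5 x)
        have t2 : a x * (φ x - ψ x) ≤ |a x| * ε := by
          calc _ ≤ |a x * (φ x - ψ x)| := le_abs_self _
            _ = |a x| * |ψ x - φ x| := by rw [abs_mul, abs_sub_comm]
            _ ≤ _ := mul_le_mul_of_nonneg_left (s5 x) (abs_nonneg _)
        have t3 : c x * (ψ x - φ x) ≤ |c x| * ε := by
          calc _ ≤ |c x * (ψ x - φ x)| := le_abs_self _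
            _ = |c x| * |ψ x - φ x| := by rw [abs_mul]
            _ ≤ _ := mul_le_mul_of_nonneg_left (s5 x) (abs_nonneg _)
        have t4 : ⟪Z x, gradient φ x - gradient ψ x⟫ ≤ ‖Z x‖ * ε := by
          refine (real_inner_le_norm _ _).trans ?_
          rw [norm_sub_rev]
          exact mul_le_mul_of_nonneg_left (s6 x) (norm_nonneg _)
        rw [inner_sub_right] at t4
        nlinarith
      · simp only [indicator_of_notMem hx]
        have hx' : R + 1 < ‖x‖ := by simpa [K] using hx
        have z1 : φ x = 0 := hR x (by linarith)
        have z2 : ψ x = 0 := s4 x hx'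
        have hgz : ∀ χ : Euc n → ℝ, (∀ y, R + 1 < ‖y‖ → χ y = 0) → gradient χ x = 0 := by
          intro χ hχ
          have : χ =ᶠ[nhds x] fun _ => 0 := by
            filter_upwards [(isOpen_lt continuous_const continuous_norm).mem_nhds hx'] with y hy
            exact hχ y hy
          rw [gradient, this.fderiv_eq]; simp
        have z3 : gradient φ x = 0 := hgz φ fun y hy => hR y (by linarith)
        have z4 : gradient ψ x = 0 := hgz ψ s4
        simp only [z1, z2, z3, z4, mul_zero, inner_zero_right]; norm_num
    linarith
  by_contra hcon
  push Not at hcon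
  set T := ∫ x, (a x * φ x + ⟪Z x, gradient φ x⟫ - c x * φ x) with hT
  have h1 := main (T / (2 * (I + 1))) (by positivity)
  have h2 : T / (2 * (I + 1)) * I ≤ T / 2 := by
    rw [div_mul_eq_mul_div, div_le_div_iff₀ (by positivity) (by norm_num)]
    nlinarith
  linarith


lemma hasDerivAt_maxsq (y : ℝ) : HasDerivAt (fun y : ℝ => (max y 0) ^ 2) (2 * max y 0) y := by
  rcases lt_trichotomy y 0 with h | h | h
  · have e : (fun y : ℝ => (max y 0) ^ 2) =ᶠ[nhds y] fun _ => 0 := by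
      filter_upwards [gt_mem_nhds h] with z hz
      simp [max_eq_right hz.le]
    rw [max_eq_right h.le, mul_zero]
    exact (hasDerivAt_const y (0:ℝ)).congr_of_eventuallyEq e
  · subst h
    simp only [max_self, mul_zero]
    rw [hasDerivAt_iff_isLittleO]
    simp only [max_self, sub_zero, smul_zero]
    have h1 : (fun x : ℝ => x ^ 2) =o[nhds 0] fun x : ℝ => x := by
      simpa using (Asymptotics.isLittleO_pow_id (𝕜 := ℝ) (n := 2) (by norm_num))
    refine Asymptotics.IsBigO.trans_isLittleO (Asymptotics.IsBigO.of_bound 1 ?_) h1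
    refine Eventually.of_forall fun x => ?_
    simp only [norm_pow, Real.norm_eq_abs, one_mul]
    rcases le_total x 0 with h | h
    · rw [max_eq_right h]; simp; try positivity
    · rw [max_eq_left h]; simp
  · have e : (fun y : ℝ => (max y 0) ^ 2) =ᶠ[nhds y] fun y => y ^ 2 := by
      filter_upwards [lt_mem_nhds h] with z hz
      simp [max_eq_left (le_of_lt hz)]
    rw [max_eq_left h.le]
    have := (hasDerivAt_pow 2 y).congr_of_eventuallyEq e
    simpa using this

section trunc
variable {n : ℕ} {U : Set (Euc n)} {v : Euc n → ℝ}

def tw (U : Set (Euc n)) (v : Euc n → ℝ) : Euc n → ℝ := U.indicator (fun x => max (v x) 0)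

lemma tw_nonneg (x : Euc n) : 0 ≤ tw U v x :=
  indicator_nonneg (fun _ _ => le_max_right _ _) x

lemma tw_cont (hv : Continuous v) (hf : ∀ x ∈ frontier U, v x ≤ 0) : Continuous (tw U v) := by
  apply continuous_indicator
  · intro a ha; exact max_eq_right (hf a ha)
  · exact (hv.max continuous_const).continuousOn

lemma tw_compact (hb : Bornology.IsBounded U) : HasCompactSupport (tw U v) := by
  apply HasCompactSupport.intro hb.isCompact_closure
  intro x hx
  exact indicator_of_notMem (fun h => hx (subset_closure h)) _

lemma tw_mem {x : Euc n} (hx : x ∈ U) {t : ℝ} (ht : 0 ≤ t) :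
    max (tw U v x - t) 0 = max (v x - t) 0 := by
  rw [tw, indicator_of_mem hx]
  rcases le_total (v x) 0 with h | h
  · rw [max_eq_right h, max_eq_right (by linarith), max_eq_right (by linarith)]
  · rw [max_eq_left h]

lemma tw_notMem {x : Euc n} (hx : x ∉ U) {t : ℝ} (ht : 0 ≤ t) :
    max (tw U v x - t) 0 = 0 := by
  rw [tw, indicator_of_notMem hx]; simp [ht]

lemma tw_hasFDerivAt (hU : IsOpen U) (hv : ContDiff ℝ 1 v) (hf : ∀ x ∈ frontier U, v x ≤ 0)
    {t : ℝ} (ht : 0 ≤ t) (x : Euc n) :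
    HasFDerivAt (fun x => (max (tw U v x - t) 0) ^ 2)
      ((2 * max (tw U v x - t) 0) • fderiv ℝ v x) x := by
  have hvd : HasFDerivAt v (fderiv ℝ v x) x :=
    (hv.differentiable (by norm_num) x).hasFDerivAt
  have hG : HasFDerivAt (fun y => (max (v y - t) 0) ^ 2)
      ((2 * max (v x - t) 0) • fderiv ℝ v x) x := by
    have := (hasDerivAt_maxsq (v x - t)).comp_hasFDerivAt x (hvd.sub_const t)
    exact this
  by_cases hx : x ∈ U
  · rw [tw_mem hx ht]
    refine hG.congr_of_eventuallyEq ?_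
    filter_upwards [hU.mem_nhds hx] with y hy
    rw [tw_mem hy ht]
  · rw [tw_notMem hx ht]
    by_cases hx2 : x ∈ closure U
    · have hfx : x ∈ frontier U := by rw [hU.frontier_eq]; exact ⟨hx2, hx⟩
      have h0 : max (v x - t) 0 = 0 := max_eq_right (by linarith [hf x hfx])
      rw [h0] at hG
      rw [mul_zero, zero_smul] at hG ⊢
      rw [hasFDerivAt_iff_isLittleO] at hG ⊢
      rw [tw_notMem hx ht]
      rw [h0] at hG
      simp only [ne_eq, OfNat.ofNat_ne_zero, not_false_eq_true, zero_pow, sub_zero,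
        zero_apply] at hG ⊢
      refine Asymptotics.IsBigO.trans_isLittleO (Asymptotics.IsBigO.of_bound 1 ?_) hG
      refine Eventually.of_forall fun y => ?_
      by_cases hy : y ∈ U
      · rw [tw_mem hy ht, one_mul]
      · rw [tw_notMem hy ht]; simp
    · rw [mul_zero, zero_smul]
      refine (hasFDerivAt_const (0:ℝ) x).congr_of_eventuallyEq ?_
      filter_upwards [isClosed_closure.isOpen_compl.mem_nhds hx2] with y hy
      rw [tw_notMem (fun h => hy (subset_closure h)) ht]; simp

lemma tw_contDiff (hU : IsOpen U) (hv : ContDiff ℝ 1 v) (hf : ∀ x ∈ frontier U, v x ≤ 0)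
    {t : ℝ} (ht : 0 ≤ t) : ContDiff ℝ 1 (fun x => (max (tw U v x - t) 0) ^ 2) := by
  rw [contDiff_one_iff_fderiv]
  refine ⟨fun x => (tw_hasFDerivAt hU hv hf ht x).differentiableAt, ?_⟩
  have : fderiv ℝ (fun x => (max (tw U v x - t) 0) ^ 2) =
      fun x => (2 * max (tw U v x - t) 0) • fderiv ℝ v x := by
    ext1 x; exact (tw_hasFDerivAt hU hv hf ht x).fderiv
  rw [this]
  have h1 := tw_cont hv.continuous hf
  have h2 := hv.continuous_fderiv (by norm_num)
  fun_prop

lemma tw_gradient (hU : IsOpen U) (hv : ContDiff ℝ 1 v) (hf : ∀ x ∈ frontier U, v x ≤ 0)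
    {t : ℝ} (ht : 0 ≤ t) (x : Euc n) :
    gradient (fun x => (max (tw U v x - t) 0) ^ 2) x =
      (2 * max (tw U v x - t) 0) • gradient v x := by
  rw [gradient, (tw_hasFDerivAt hU hv hf ht x).fderiv, gradient, map_smul]

end trunc

lemma pw {n : ℕ} {p C₁ C₂ α : ℝ} (hp : 1 < p) (hC₁ : 0 < C₁) (hC₂ : 0 < C₂)
    (hα₁ : p - 1 ≤ α) (hα₂ : α ≤ p) : ∃ K : ℝ, 0 < K ∧ ∀ (a ξ d : Euc n),
    C₁ * ‖ξ‖ ^ p ≤ ⟪ξ, a⟫ → ‖a‖ ≤ C₂ * ‖ξ‖ ^ (p - 1) → ∀ ρ W B : ℝ, 0 < ρ → 0 ≤ W → 0 ≤ B →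
    ‖d‖ ≤ 2 * ρ → B * W * ρ ^ α ≤ C₁ / 2 * ρ ^ p →
    C₁ * ρ ^ (p - 1) * ‖ξ - d‖ - (if ξ = 0 ∧ d = 0 then 0 else K * ρ ^ p) ≤
      2 * ⟪a, ξ - d⟫ - B * W * ‖ξ‖ ^ α := by
  set μ := C₁ / (8 * C₂) with hμ
  have hμ0 : 0 < μ := by positivity
  refine ⟨4 * C₂ * μ ^ (-(p - 1)) + 4 * C₁, by positivity, ?_⟩
  intro a ξ d h1 h2 ρ W B hρ hW hB hd hcoup
  by_cases h0 : ξ = 0 ∧ d = 0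
  · obtain ⟨rfl, rfl⟩ := h0
    have : (0:ℝ) ^ α = 0 := Real.zero_rpow (by linarith)
    simp [this]
  rw [if_neg h0]
  set x := ‖ξ‖ with hx
  have hx0 : 0 ≤ x := norm_nonneg _
  have hρp : 0 < ρ ^ p := by positivity
  have hsplit : ∀ y : ℝ, 0 ≤ y → y * y ^ (p - 1) = y ^ p := by
    intro y hy
    rcases hy.eq_or_lt with h | h
    · rw [← h, Real.zero_rpow (by linarith), Real.zero_rpow (by linarith), zero_mul]
    · nth_rewrite 1 [← Real.rpow_one y]
      rw [← Real.rpow_add h]; congr 1; ring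
  have hxp : 0 ≤ x ^ p := by positivity
  -- B term
  have hBt : B * W * x ^ α ≤ C₁ / 2 * (ρ ^ p + x ^ p) := by
    rcases le_total x ρ with h | h
    · have : x ^ α ≤ ρ ^ α := Real.rpow_le_rpow hx0 h (by linarith)
      have : B * W * x ^ α ≤ B * W * ρ ^ α := mul_le_mul_of_nonneg_left this (by positivity)
      nlinarith
    · have hxpos : 0 < x := by linarith
      have e1 : x ^ α = ρ ^ α * (x / ρ) ^ α := by
        rw [← Real.mul_rpow hρ.le (by positivity)]; congr 1; field_simp
      have e2 : ρ ^ p * (x / ρ) ^ p = x ^ p := by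
        rw [← Real.mul_rpow hρ.le (by positivity)]; congr 1; field_simp
      have h3 : (x / ρ) ^ α ≤ (x / ρ) ^ p :=
        Real.rpow_le_rpow_of_exponent_le (by rw [le_div_iff₀ hρ]; linarith) hα₂
      calc B * W * x ^ α = (B * W * ρ ^ α) * (x / ρ) ^ α := by rw [e1]; ring
        _ ≤ (C₁ / 2 * ρ ^ p) * (x / ρ) ^ p := by gcongr
        _ = C₁ / 2 * x ^ p := by rw [← e2]; ring
        _ ≤ _ := by nlinarith
  -- cross term
  have hy : x ^ (p - 1) * ρ ≤ μ * x ^ p + μ ^ (-(p - 1)) * ρ ^ p := by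
    rcases le_total ρ (μ * x) with h | h
    · have : x ^ (p - 1) * ρ ≤ x ^ (p - 1) * (μ * x) := mul_le_mul_of_nonneg_left h (by positivity)
      have e := hsplit x hx0
      have : 0 ≤ μ ^ (-(p - 1)) * ρ ^ p := by positivity
      nlinarith
    · have h3 : x ≤ μ⁻¹ * ρ := by rw [inv_mul_eq_div, le_div_iff₀ hμ0]; linarith
      have h4 : x ^ (p - 1) ≤ (μ⁻¹ * ρ) ^ (p - 1) := Real.rpow_le_rpow hx0 h3 (by linarith)
      rw [Real.mul_rpow (by positivity) hρ.le, Real.inv_rpow hμ0.le,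
        ← Real.rpow_neg hμ0.le] at h4
      have e := hsplit ρ hρ.le
      have h5 : x ^ (p - 1) * ρ ≤ μ ^ (-(p - 1)) * ρ ^ (p - 1) * ρ :=
        mul_le_mul_of_nonneg_right h4 hρ.le
      have : 0 ≤ μ * x ^ p := by positivity
      have e2 : μ ^ (-(p - 1)) * ρ ^ (p - 1) * ρ = μ ^ (-(p - 1)) * ρ ^ p := by rw [← e]; ring
      linarith
  have hcross : ⟪a, d⟫ ≤ 2 * C₂ * (x ^ (p - 1) * ρ) := by
    calc ⟪a, d⟫ ≤ ‖a‖ * ‖d‖ := real_inner_le_norm _ _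
      _ ≤ (C₂ * x ^ (p - 1)) * (2 * ρ) := by gcongr
      _ = _ := by ring
  have hcross2 : 2 * ⟪a, d⟫ ≤ C₁ / 2 * x ^ p + 4 * C₂ * μ ^ (-(p - 1)) * ρ ^ p := by
    have e : 4 * C₂ * μ = C₁ / 2 := by rw [hμ]; field_simp; norm_num
    calc 2 * ⟪a, d⟫ ≤ 4 * C₂ * (x ^ (p - 1) * ρ) := by linarith
      _ ≤ 4 * C₂ * (μ * x ^ p + μ ^ (-(p - 1)) * ρ ^ p) := by gcongr
      _ = 4 * C₂ * μ * x ^ p + 4 * C₂ * μ ^ (-(p - 1)) * ρ ^ p := by ring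
      _ = _ := by rw [e]
  have hlin : ρ ^ (p - 1) * ‖ξ - d‖ ≤ 3 * ρ ^ p + x ^ p := by
    have h3 : ‖ξ - d‖ ≤ x + 2 * ρ := (norm_sub_le _ _).trans (by linarith)
    have h4 : ρ ^ (p - 1) * x ≤ ρ ^ p + x ^ p := by
      rcases le_total x ρ with h | h
      · have := mul_le_mul_of_nonneg_left h (show 0 ≤ ρ ^ (p - 1) by positivity)
        have e := hsplit ρ hρ.le
        nlinarith
      · have : ρ ^ (p - 1) ≤ x ^ (p - 1) := Real.rpow_le_rpow hρ.le h (by linarith)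
        have := mul_le_mul_of_nonneg_right this hx0
        have e := hsplit x hx0
        nlinarith
    have e := hsplit ρ hρ.le
    have h5 := mul_le_mul_of_nonneg_left h3 (show 0 ≤ ρ ^ (p - 1) by positivity)
    nlinarith
  have hlin2 : C₁ * ρ ^ (p - 1) * ‖ξ - d‖ ≤ 3 * C₁ * ρ ^ p + C₁ * x ^ p := by
    have := mul_le_mul_of_nonneg_left hlin hC₁.le
    nlinarith
  rw [inner_sub_right, real_inner_comm]
  have hC1ρ : 0 < C₁ * ρ ^ p := by positivity
  nlinarith

structure Dat {n : ℕ} (A : Euc n → Euc n → Euc n) (b a u : Euc n → ℝ) (p C₁ C₂ α : ℝ) : Prop where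
  coer : ∀ x ζ : Euc n, C₁ * ‖ζ‖ ^ p ≤ ⟪ζ, A x ζ⟫ ∧ ‖A x ζ‖ ≤ C₂ * ‖ζ‖ ^ (p - 1)
  hu : ContDiff ℝ 1 u
  hb : ∀ x, 0 ≤ b x
  ha : ∀ x, 0 ≤ a x
  liA : LocallyIntegrable (fun x => A x (gradient u x))
  lia : LocallyIntegrable a
  lib : LocallyIntegrable (fun x => b x * ‖gradient u x‖ ^ α)
  weak : ∀ φ : Euc n → ℝ, ContDiff ℝ 1 φ → HasCompactSupport φ → (∀ x, 0 ≤ φ x) →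
    ∫ x, (a x * φ x + ⟪A x (gradient u x), gradient φ x⟫ -
      b x * ‖gradient u x‖ ^ α * φ x) ≤ 0

def Sset {n : ℕ} (u ψ : Euc n → ℝ) : Set (Euc n) := {x | ¬ (gradient u x = 0 ∧ gradient ψ x = 0)}

lemma energy {n : ℕ} {p C₁ C₂ α : ℝ} (hp : 1 < p) (hC₁ : 0 < C₁) (hC₂ : 0 < C₂)
    (hα₁ : p - 1 ≤ α) (hα₂ : α ≤ p) : ∃ K : ℝ, 0 < K ∧
    ∀ (A : Euc n → Euc n → Euc n) (b a u : Euc n → ℝ), Dat A b a u p C₁ C₂ α →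
    ∀ (U : Set (Euc n)) (ψ : Euc n → ℝ) (ρ W B h : ℝ), IsOpen U → Bornology.IsBounded U →
    ContDiff ℝ 1 ψ → (∀ x ∈ frontier U, u x - ψ x ≤ 0) → 0 < ρ → 0 ≤ W → 0 ≤ B →
    (∀ x ∈ U, u x - ψ x ≤ W) → (∀ x ∈ U, ‖gradient ψ x‖ ≤ 2 * ρ) →
    (∀ᵐ x, x ∈ U → b x ≤ B) → (∀ᵐ x, x ∈ U → 0 < u x - ψ x → h ≤ a x) →
    B * W * ρ ^ α ≤ C₁ / 2 * ρ ^ p → ∀ t : ℝ, 0 ≤ t →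
    C₁ * ρ ^ (p - 1) * (∫ x, max (tw U (fun x => u x - ψ x) x - t) 0 *
        ‖gradient (fun x => u x - ψ x) x‖) +
      h * (∫ x, (max (tw U (fun x => u x - ψ x) x - t) 0) ^ 2) ≤
      K * ρ ^ p * ∫ x in Sset u ψ, max (tw U (fun x => u x - ψ x) x - t) 0 := by
  obtain ⟨K, hK, hpw⟩ := pw (n := n) hp hC₁ hC₂ hα₁ hα₂
  refine ⟨K, hK, ?_⟩
  intro A b a u hD U ψ ρ W B h hU hUb hψ hfr hρ hW hB hvW hgψ hbB hah hcoup t ht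
  set v : Euc n → ℝ := fun x => u x - ψ x with hv
  have hvC : ContDiff ℝ 1 v := hD.hu.sub hψ
  have hgv : ∀ x, gradient v x = gradient u x - gradient ψ x := by
    intro x
    rw [gradient, gradient, gradient, ← map_sub, hv,
      fderiv_fun_sub (hD.hu.differentiable (by norm_num) x) (hψ.differentiable (by norm_num) x)]
  set m : Euc n → ℝ := fun x => max (tw U v x - t) 0 with hm
  have hmc : Continuous m := by
    have := tw_cont hvC.continuous hfr
    fun_prop
  have hmcs : HasCompactSupport m :=
    (tw_compact hUb).comp_left (g := fun y : ℝ => max (y - t) 0) (by simp [ht])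
  have hm0 : ∀ x, 0 ≤ m x := fun x => le_max_right _ _
  have hSm : MeasurableSet (Sset u ψ) := by
    have h1 : MeasurableSet {x : Euc n | gradient u x = 0} :=
      (isClosed_eq (continuous_gradient hD.hu) continuous_const).measurableSet
    have h2 : MeasurableSet {x : Euc n | gradient ψ x = 0} :=
      (isClosed_eq (continuous_gradient hψ) continuous_const).measurableSet
    exact (h1.inter h2).compl
  have hφC : ContDiff ℝ 1 (fun x => m x ^ 2) := tw_contDiff hU hvC hfr ht
  have hφcs : HasCompactSupport (fun x => m x ^ 2) :=
    hmcs.comp_left (g := fun y : ℝ => y ^ 2) (by simp)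
  have hweak := hD.weak _ hφC hφcs (fun x => by positivity)
  have i1 : Integrable (fun x => m x * ‖gradient v x‖) :=
    (hmc.mul (continuous_gradient hvC).norm).integrable_of_hasCompactSupport hmcs.mul_right
  have i2 : Integrable (fun x => m x ^ 2) :=
    hφC.continuous.integrable_of_hasCompactSupport hφcs
  have i3 : Integrable ((Sset u ψ).indicator m) :=
    (hmc.integrable_of_hasCompactSupport hmcs).indicator hSm
  have j1 := int_mul hD.lia hφC.continuous hφcs
  have j2 := int_inner hD.liA (continuous_gradient hφC) (hasCompactSupport_gradient hφcs)
  have j3 := int_mul hD.lib hφC.continuous hφcs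
  have hle : ∫ x, (C₁ * ρ ^ (p - 1) * (m x * ‖gradient v x‖) + h * m x ^ 2 -
      K * ρ ^ p * (Sset u ψ).indicator m x) ≤ ∫ x, (a x * m x ^ 2 +
      ⟪A x (gradient u x), gradient (fun x => m x ^ 2) x⟫ -
      b x * ‖gradient u x‖ ^ α * m x ^ 2) := by
    apply integral_mono_ae (((i1.const_mul _).add (i2.const_mul _)).sub (i3.const_mul _))
      ((j1.add j2).sub j3)
    filter_upwards [hbB, hah] with x hx1 hx2
    have hg : gradient (fun x => m x ^ 2) x = (2 * m x) • gradient v x :=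
      tw_gradient hU hvC hfr ht x
    simp only [Pi.sub_apply, Pi.add_apply]
    rw [hg, inner_smul_right]
    rcases (hm0 x).eq_or_lt with h0 | h0
    · rw [← h0]
      have : (Sset u ψ).indicator m x = 0 := by
        by_cases hxs : x ∈ Sset u ψ
        · rw [indicator_of_mem hxs, ← h0]
        · rw [indicator_of_notMem hxs]
      simp [this]
    · have hxU : x ∈ U := by
        by_contra hc
        have := tw_notMem (v := v) hc ht
        rw [hm] at h0; simp only at h0; linarith
      have hmv : m x = max (v x - t) 0 := tw_mem hxU ht
      have hvt : 0 < v x - t := by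
        by_contra hc
        rw [max_eq_right (by linarith)] at hmv; linarith
      rw [max_eq_left hvt.le] at hmv
      have hmW : m x ≤ W := by have := hvW x hxU; rw [hmv]; simp only [hv]; linarith
      have hax : h ≤ a x := hx2 hxU (by simp only [hv] at hvt; linarith)
      have hbx : b x ≤ B := hx1 hxU
      have hp' := hpw (A x (gradient u x)) (gradient u x) (gradient ψ x) (hD.coer x _).1
        (hD.coer x _).2 ρ W B hρ hW hB (hgψ x hxU) hcoup
      rw [← hgv x] at hp'
      have hind : K * ρ ^ p * (Sset u ψ).indicator m x =
          (if gradient u x = 0 ∧ gradient ψ x = 0 then 0 else K * ρ ^ p) * m x := by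
        by_cases hxs : gradient u x = 0 ∧ gradient ψ x = 0
        · rw [indicator_of_notMem (by simp [Sset, hxs]), if_pos hxs]; simp
        · rw [indicator_of_mem (by simpa [Sset] using hxs), if_neg hxs]
      rw [hind]
      have hbt : b x * ‖gradient u x‖ ^ α * m x ^ 2 ≤ B * W * ‖gradient u x‖ ^ α * m x := by
        have hy : 0 ≤ ‖gradient u x‖ ^ α := by positivity
        calc b x * ‖gradient u x‖ ^ α * m x ^ 2 = (b x * m x) * (‖gradient u x‖ ^ α * m x) := by ring
          _ ≤ (B * W) * (‖gradient u x‖ ^ α * m x) := by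
              apply mul_le_mul_of_nonneg_right _ (by positivity)
              exact mul_le_mul hbx hmW h0.le hB
          _ = _ := by ring
      have hp2 := mul_le_mul_of_nonneg_right hp' h0.le
      have hh : h * m x ^ 2 ≤ a x * m x ^ 2 := mul_le_mul_of_nonneg_right hax (by positivity)
      rw [sub_mul, sub_mul] at hp2
      nlinarith
  have hsplit : ∫ x, (C₁ * ρ ^ (p - 1) * (m x * ‖gradient v x‖) + h * m x ^ 2 -
      K * ρ ^ p * (Sset u ψ).indicator m x) = C₁ * ρ ^ (p - 1) * (∫ x, m x * ‖gradient v x‖) +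
      h * (∫ x, m x ^ 2) - K * ρ ^ p * ∫ x in Sset u ψ, m x := by
    rw [integral_sub (f := fun x => C₁ * ρ ^ (p - 1) * (m x * ‖gradient v x‖) + h * m x ^ 2)
      ((i1.const_mul _).add (i2.const_mul _)) (i3.const_mul _),
      integral_add (i1.const_mul _) (i2.const_mul _), integral_const_mul, integral_const_mul,
      integral_const_mul, integral_indicator hSm]
  rw [hsplit] at hle
  linarith


lemma meas_Sset {n : ℕ} {u ψ : Euc n → ℝ} (hu : ContDiff ℝ 1 u) (hψ : ContDiff ℝ 1 ψ) :
    MeasurableSet (Sset u ψ) := by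
  have h1 : MeasurableSet {x : Euc n | gradient u x = 0} :=
    (isClosed_eq (continuous_gradient hu) continuous_const).measurableSet
  have h2 : MeasurableSet {x : Euc n | gradient ψ x = 0} :=
    (isClosed_eq (continuous_gradient hψ) continuous_const).measurableSet
  exact (h1.inter h2).compl

lemma combo {n : ℕ} (hn : 2 ≤ n) {p C₁ C₂ α : ℝ} (hp : 1 < p) (hC₁ : 0 < C₁) (hC₂ : 0 < C₂)
    (hα₁ : p - 1 ≤ α) (hα₂ : α ≤ p) : ∃ K c : ℝ, 0 < K ∧ 0 < c ∧
    ∀ (A : Euc n → Euc n → Euc n) (b a u : Euc n → ℝ), Dat A b a u p C₁ C₂ α →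
    ∀ (U : Set (Euc n)) (ψ : Euc n → ℝ) (ρ W B h : ℝ), IsOpen U → Bornology.IsBounded U →
    ContDiff ℝ 1 ψ → (∀ x ∈ frontier U, u x - ψ x ≤ 0) → 0 < ρ → 0 ≤ W → 0 ≤ B →
    (∀ x ∈ U, u x - ψ x ≤ W) → (∀ x ∈ U, ‖gradient ψ x‖ ≤ 2 * ρ) →
    (∀ᵐ x, x ∈ U → b x ≤ B) → (∀ᵐ x, x ∈ U → 0 < u x - ψ x → h ≤ a x) →
    B * W * ρ ^ α ≤ C₁ / 2 * ρ ^ p → 0 ≤ h →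
    h * (∫ x, (tw U (fun x => u x - ψ x) x) ^ 2) ≤
      K * ρ ^ p * ∫ x in Sset u ψ, tw U (fun x => u x - ψ x) x ∧
    ∀ t V : ℝ, 0 ≤ t → 0 < V →
      ρ ^ n * (∫ x in Sset u ψ, max (tw U (fun x => u x - ψ x) x - t) 0) ≤ c * V ^ (n + 1) →
      ∀ x, tw U (fun x => u x - ψ x) x ≤ t + V := by
  obtain ⟨K, hK, hen⟩ := energy (n := n) hp hC₁ hC₂ hα₁ hα₂
  obtain ⟨θ, hθ, hdg⟩ := dg n hn
  set L := 2 * K / C₁ with hL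
  have hL0 : 0 < L := by positivity
  refine ⟨K, θ ^ (n - 1) / L ^ n, hK, by positivity, ?_⟩
  intro A b a u hD U ψ ρ W B h hU hUb hψ hfr hρ hW hB hvW hgψ hbB hah hcoup hh
  have hen := hen A b a u hD U ψ ρ W B h hU hUb hψ hfr hρ hW hB hvW hgψ hbB hah hcoup
  set v : Euc n → ℝ := fun x => u x - ψ x with hv
  have hvC : ContDiff ℝ 1 v := hD.hu.sub hψ
  set w := tw U v with hw
  have hw0 : ∀ x, 0 ≤ w x := fun x => tw_nonneg x
  have hmw : ∀ x, max (w x - 0) 0 = w x := fun x => by rw [sub_zero, max_eq_left (hw0 x)]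
  have hρp : 0 < ρ ^ (p - 1) := by positivity
  refine ⟨?_, ?_⟩
  · have h1 := hen 0 le_rfl
    simp only [hmw] at h1
    have h2 : 0 ≤ ∫ x, w x * ‖gradient v x‖ :=
      integral_nonneg fun x => mul_nonneg (hw0 x) (norm_nonneg _)
    have h3 : 0 ≤ C₁ * ρ ^ (p - 1) * ∫ x, w x * ‖gradient v x‖ := by positivity
    linarith
  · intro t V ht hV hcond
    refine hdg w (Sset u ψ) (tw_cont hvC.continuous hfr) (tw_compact hUb) hw0
      (meas_Sset hD.hu hψ) (L * ρ) t V (by positivity) ht hV ?_ ?_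
    · intro s hs
      have hs0 : 0 ≤ s := ht.trans hs
      refine ⟨tw_contDiff hU hvC hfr hs0, ?_⟩
      have e : ∀ x, ‖fderiv ℝ (fun x => (max (w x - s) 0) ^ 2) x‖ =
          2 * (max (w x - s) 0 * ‖gradient v x‖) := by
        intro x
        rw [← norm_gradient_eq, tw_gradient hU hvC hfr hs0, norm_smul, Real.norm_eq_abs,
          abs_of_nonneg (by positivity)]
        ring
      simp only [e]
      rw [integral_const_mul]
      have h1 := hen s hs0
      have h2 : 0 ≤ h * ∫ x, (max (w x - s) 0) ^ 2 :=
        mul_nonneg hh (integral_nonneg fun x => by positivity)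
      have e2 : ρ ^ p = ρ ^ (p - 1) * ρ := by
        rw [← Real.rpow_add_one hρ.ne']; congr 1; ring
      rw [e2] at h1
      have h3 : C₁ * ρ ^ (p - 1) * (∫ x, max (w x - s) 0 * ‖gradient v x‖) ≤
        K * (ρ ^ (p - 1) * ρ) * ∫ x in Sset u ψ, max (w x - s) 0 := by linarith
      have h4 : (∫ x, max (w x - s) 0 * ‖gradient v x‖) ≤
          K / C₁ * ρ * ∫ x in Sset u ψ, max (w x - s) 0 := by
        have h5 : 0 < C₁ * ρ ^ (p - 1) := by positivity
        refine le_of_mul_le_mul_left (h3.trans (le_of_eq ?_)) h5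
        field_simp
      calc _ ≤ 2 * (K / C₁ * ρ * ∫ x in Sset u ψ, max (w x - s) 0) := by gcongr
        _ = _ := by rw [hL]; ring
    · set I := ∫ x in Sset u ψ, max (w x - t) 0 with hI
      have hI0 : 0 ≤ I := integral_nonneg fun x => le_max_right _ _
      have hn1 : (0:ℝ) < n - 1 := by
        have : (2:ℝ) ≤ n := by exact_mod_cast hn
        linarith
      have hcn : ((n - 1 : ℕ) : ℝ) = n - 1 := by
        rw [Nat.cast_sub (by omega)]; simp
      have e1 : (n:ℝ) / (n - 1) - 1 = 1 / (n - 1) := by field_simp; ring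
      have e2 : 2 * ((n:ℝ) / (n - 1)) - 1 = (((n + 1 : ℕ)) : ℝ) * (1 / (n - 1)) := by
        push_cast; field_simp; ring
      have e3 : (n:ℝ) / (n - 1) = n * (1 / (n - 1)) := by ring
      rw [e1, e2, e3, Real.rpow_mul (by positivity), Real.rpow_mul hV.le, Real.rpow_natCast,
        Real.rpow_natCast, ← Real.mul_rpow (by positivity) hI0]
      have e4 : θ = (θ ^ (n - 1)) ^ (1 / ((n:ℝ) - 1)) := by
        rw [← Real.rpow_natCast, ← Real.rpow_mul hθ.le, hcn, mul_one_div_cancel hn1.ne',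
          Real.rpow_one]
      rw [e4, ← Real.mul_rpow (by positivity) (by positivity)]
      apply Real.rpow_le_rpow (by positivity) _ (by positivity)
      calc (L * ρ) ^ n * I = L ^ n * (ρ ^ n * I) := by ring
        _ ≤ L ^ n * (θ ^ (n - 1) / L ^ n * V ^ (n + 1)) := by gcongr
        _ = _ := by field_simp

lemma core {n : ℕ} (hn : 2 ≤ n) {p C₁ C₂ α κ : ℝ} (hp : 1 < p) (hC₁ : 0 < C₁) (hC₂ : 0 < C₂)
    (hα₁ : p - 1 ≤ α) (hα₂ : α ≤ p) (hκ : 0 < κ) : ∃ K : ℝ, 0 < K ∧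
    ∀ (A : Euc n → Euc n → Euc n) (b a u : Euc n → ℝ), Dat A b a u p C₁ C₂ α →
    ∀ (z : Euc n) (δ W ℓ B h : ℝ), 0 < δ → 0 < W → 0 ≤ B → 0 ≤ h →
    (∀ᵐ x, x ∈ ball z δ → b x ≤ B) → (∀ᵐ x, x ∈ ball z δ → ℓ < u x → h ≤ a x) →
    (∀ x ∈ closedBall z δ, u x ≤ ℓ + W) → ℓ + κ * W ≤ u z →
    B * W * (W / δ) ^ α ≤ C₁ / 2 * (W / δ) ^ p →
    h * δ ^ p ≤ K * W ^ (p - 1) := by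
  obtain ⟨K, c, hK, hc, hco⟩ := combo hn hp hC₁ hC₂ hα₁ hα₂
  set ω := (volume : Measure (Euc n)).real (ball 0 1) with hω
  have hω0 : 0 ≤ ω := measureReal_nonneg
  set c' := (κ / 3) * (c * (κ / 3) ^ (n + 1)) with hc'
  have hc'0 : 0 < c' := by positivity
  refine ⟨K * (ω + 1) / c', by positivity, ?_⟩
  intro A b a u hD z δ W ℓ B h hδ hW hB hh hbB hah hu1 hu2 hcoup
  set ψ : Euc n → ℝ := fun x => ℓ + W / δ ^ 2 * ‖x - z‖ ^ 2 with hψ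
  have hψC : ContDiff ℝ 1 ψ := by
    have : ContDiff ℝ 1 (fun x : Euc n => ‖x - z‖ ^ 2) :=
      (contDiff_id.sub contDiff_const).norm_sq ℝ
    exact contDiff_const.add (contDiff_const.mul this)
  have hgψ : ∀ x ∈ ball z δ, ‖gradient ψ x‖ ≤ 2 * (W / δ) := by
    intro x hx
    have h1 : HasFDerivAt ψ ((W / δ ^ 2) • (2 • (innerSL ℝ (x - z)))) x := by
      have := (((hasFDerivAt_id (𝕜 := ℝ) x).sub_const z).norm_sq.const_mul (W / δ ^ 2)).const_add ℓ
      exact this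
    rw [norm_gradient_eq, h1.fderiv, norm_smul, ← Nat.cast_smul_eq_nsmul ℝ, norm_smul,
      innerSL_apply_norm, Real.norm_eq_abs, abs_of_nonneg (by positivity)]
    have : ‖x - z‖ ≤ δ := by rw [← dist_eq_norm]; exact (mem_ball.1 hx).le
    simp only [Nat.cast_ofNat, Real.norm_ofNat]
    calc W / δ ^ 2 * (2 * ‖x - z‖) ≤ W / δ ^ 2 * (2 * δ) := by gcongr
      _ = _ := by field_simp
  have hψℓ : ∀ x, ℓ ≤ ψ x := fun x => by simp only [hψ]; have : 0 ≤ W / δ ^ 2 * ‖x - z‖ ^ 2 := by positivity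
                                         linarith
  have hfr : ∀ x ∈ frontier (ball z δ), u x - ψ x ≤ 0 := by
    intro x hx
    rw [frontier_ball z hδ.ne'] at hx
    have h1 := hu1 x (sphere_subset_closedBall hx)
    have h2 : ‖x - z‖ = δ := by rw [← dist_eq_norm]; exact hx
    have h3 : ψ x = ℓ + W := by simp only [hψ, h2]; field_simp
    linarith
  have hvW : ∀ x ∈ ball z δ, u x - ψ x ≤ W := by
    intro x hx
    linarith [hu1 x (ball_subset_closedBall hx), hψℓ x]
  obtain ⟨g1, g2⟩ := hco A b a u hD (ball z δ) ψ (W / δ) W B h isOpen_ball isBounded_ball hψC hfr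
    (by positivity) hW.le hB hvW hgψ hbB (by
      filter_upwards [hah] with x hx h1 h2
      exact hx h1 (by linarith [hψℓ x])) hcoup hh
  set v : Euc n → ℝ := fun x => u x - ψ x with hv
  set w := tw (ball z δ) v with hw
  have hvC : ContDiff ℝ 1 v := hD.hu.sub hψC
  have hwc : Continuous w := tw_cont hvC.continuous hfr
  have hwcs : HasCompactSupport w := tw_compact isBounded_ball
  have hw0 : ∀ x, 0 ≤ w x := fun x => tw_nonneg x
  have hwz : κ * W ≤ w z := by
    have : w z = max (v z) 0 := by rw [hw, tw, indicator_of_mem (mem_ball_self hδ)]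
    rw [this]
    refine le_trans ?_ (le_max_left _ _)
    simp [hv, hψ]; linarith
  set V := κ * W / 3 with hV
  have hV0 : 0 < V := by positivity
  have hlow : c * V ^ (n + 1) < (W / δ) ^ n * ∫ x in Sset u ψ, max (w x - V) 0 := by
    by_contra hcon
    have := g2 V V hV0.le hV0 (not_lt.1 hcon) z
    linarith
  have hmV : Integrable (fun x => max (w x - V) 0) := by
    apply Continuous.integrable_of_hasCompactSupport (by fun_prop)
    exact hwcs.comp_left (g := fun y : ℝ => max (y - V) 0) (by simp [hV0.le])
  have hwi : Integrable w := hwc.integrable_of_hasCompactSupport hwcs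
  have hw2 : Integrable (fun x => w x ^ 2) := by
    apply Continuous.integrable_of_hasCompactSupport (by fun_prop)
    exact hwcs.comp_left (g := fun y : ℝ => y ^ 2) (by simp)
  set I := ∫ x in Sset u ψ, max (w x - V) 0 with hI
  have hIle : V * I ≤ ∫ x, w x ^ 2 := by
    calc V * I ≤ V * ∫ x, max (w x - V) 0 := by
          gcongr
          exact setIntegral_le_integral hmV (Eventually.of_forall fun x => le_max_right _ _)
      _ = ∫ x, V * max (w x - V) 0 := by rw [integral_const_mul]
      _ ≤ ∫ x, w x ^ 2 := by
          apply integral_mono (hmV.const_mul _) hw2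
          intro x
          simp only
          rcases le_total (w x - V) 0 with h1 | h1
          · rw [max_eq_right h1]; nlinarith [hw0 x]
          · rw [max_eq_left h1]; nlinarith [hw0 x]
  have hup : ∫ x in Sset u ψ, w x ≤ W * (δ ^ n * ω) := by
    calc ∫ x in Sset u ψ, w x ≤ ∫ x, w x :=
          setIntegral_le_integral hwi (Eventually.of_forall hw0)
      _ ≤ ∫ x, (ball z δ).indicator (fun _ => W) x := by
          apply integral_mono hwi
          · exact (integrable_indicator_iff measurableSet_ball).2 (integrableOn_const (by finiteness))
          · intro x
            simp only [hw, tw]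
            apply indicator_le_indicator'
            intro hx
            exact max_le (hvW x hx) hW.le
      _ = W * (δ ^ n * ω) := by
          rw [integral_indicator measurableSet_ball, setIntegral_const, smul_eq_mul, mul_comm, hω]
          congr 1
          rw [measureReal_def, Measure.addHaar_ball_of_pos volume z hδ, ENNReal.toReal_mul,
            ENNReal.toReal_ofReal (by positivity), measureReal_def]
          simp
  have hWδ : (W / δ) ^ n = W ^ n / δ ^ n := div_pow _ _ _
  have hI2 : c * (κ / 3) ^ (n + 1) * W * δ ^ n ≤ I := by
    have h1 : c * V ^ (n + 1) = (W / δ) ^ n * (c * (κ / 3) ^ (n + 1) * W * δ ^ n) := by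
      rw [hWδ, hV, show κ * W / 3 = (κ / 3) * W by ring, mul_pow, pow_succ W]; field_simp
    rw [h1] at hlow
    exact (lt_of_mul_lt_mul_left hlow (by positivity)).le
  have e1 : (W / δ) ^ p = W ^ (p - 1) * W / δ ^ p := by
    rw [Real.div_rpow hW.le hδ.le, ← Real.rpow_add_one hW.ne']; congr 2; ring
  have fin : h * (V * (c * (κ / 3) ^ (n + 1) * W * δ ^ n)) ≤
      K * (W / δ) ^ p * (W * (δ ^ n * ω)) := by
    calc _ ≤ h * (V * I) := by gcongr
      _ ≤ h * ∫ x, w x ^ 2 := by gcongr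
      _ ≤ _ := g1
      _ ≤ _ := by gcongr
  have hδp : 0 < δ ^ p := by positivity
  rw [e1] at fin
  have hq : (h * δ ^ p * c') * (W ^ 2 * δ ^ n / δ ^ p) ≤
      (K * ω * W ^ (p - 1)) * (W ^ 2 * δ ^ n / δ ^ p) := by
    calc _ = h * (V * (c * (κ / 3) ^ (n + 1) * W * δ ^ n)) := by rw [hc', hV]; field_simp
      _ ≤ _ := fin
      _ = _ := by field_simp
  have hq2 := le_of_mul_le_mul_right hq (by positivity)
  rw [div_mul_eq_mul_div, le_div_iff₀ hc'0]
  have : 0 ≤ K * W ^ (p - 1) := by positivity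
  nlinarith

lemma le_sphMax {n : ℕ} {u : Euc n → ℝ} (hu : Continuous u) {r : ℝ} {x : Euc n}
    (hx : ‖x‖ = r) : u x ≤ sphMax u r :=
  le_csSup (((isCompact_sphere (0 : Euc n) r).image hu).bddAbove)
    (mem_image_of_mem u (by simpa using hx))

lemma sphMax_exists {n : ℕ} (hn : 2 ≤ n) {u : Euc n → ℝ} (hu : Continuous u) {r : ℝ}
    (hr : 0 ≤ r) : ∃ x : Euc n, ‖x‖ = r ∧ u x = sphMax u r := by
  have : Nonempty (Fin n) := ⟨⟨0, by omega⟩⟩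
  have hne : (sphere (0 : Euc n) r).Nonempty := NormedSpace.sphere_nonempty.2 hr
  obtain ⟨x, hx, h⟩ := ((isCompact_sphere (0 : Euc n) r).image hu).sSup_mem (hne.image u)
  exact ⟨x, by simpa using hx, h⟩

lemma maxprin {n : ℕ} (hn : 2 ≤ n) {p C₁ C₂ α : ℝ} (hp : 1 < p) (hC₁ : 0 < C₁) (hC₂ : 0 < C₂)
    (hα₁ : p - 1 ≤ α) (hα₂ : α ≤ p)
    {A : Euc n → Euc n → Euc n} {b a u : Euc n → ℝ} (hD : Dat A b a u p C₁ C₂ α)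
    (hlb : LocBdd b) {r : ℝ} (hr : 0 < r) {x : Euc n} (hx : ‖x‖ ≤ r) : u x ≤ sphMax u r := by
  obtain ⟨K, c, hK, hc, hco⟩ := combo hn hp hC₁ hC₂ hα₁ hα₂
  have huc := hD.hu.continuous
  obtain ⟨x0, hx0, hmax⟩ := (isCompact_closedBall (0 : Euc n) r).exists_isMaxOn
    ⟨0, by simp [hr.le]⟩ huc.continuousOn
  set M := sphMax u r with hM
  set m := u x0 with hm
  have hmax' : ∀ y : Euc n, ‖y‖ ≤ r → u y ≤ m := fun y hy => hmax (by simpa using hy)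
  refine (hmax' x hx).trans ?_
  by_contra hcon
  push Not at hcon
  obtain ⟨B0, hB0⟩ := hlb _ (isCompact_closedBall (0 : Euc n) r)
  set B := max B0 0 with hB
  have hB_nonneg : 0 ≤ B := le_max_right _ _
  set δ := C₁ / (2 * (B + 1)) with hδ
  have hδ0 : 0 < δ := by positivity
  have hBδ : B * δ ≤ C₁ / 2 := by
    have : (B + 1) * δ = C₁ / 2 := by rw [hδ]; field_simp
    nlinarith
  set S := Sset u (fun _ => (0:ℝ)) with hS
  have hSm : MeasurableSet S := meas_Sset hD.hu contDiff_const
  have hSk : ∀ k : ℝ, Sset u (fun _ => k) = S := by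
    intro k; simp [Sset, hS, gradient]
  set T : ℕ → Set (Euc n) := fun j => ball 0 r ∩ S ∩ {x | m - 1 / ((j:ℝ) + 1) < u x} with hT
  have hTm : ∀ j, MeasurableSet (T j) := fun j =>
    (measurableSet_ball.inter hSm).inter (isOpen_lt continuous_const huc).measurableSet
  have hTfin : ∀ j, volume (T j) ≠ ∞ := fun j =>
    ((measure_mono (fun x hx => hx.1.1)).trans_lt measure_ball_lt_top).ne
  have hlim : Tendsto (fun j => volume (T j)) atTop (nhds (volume (⋂ j, T j))) := by
    apply tendsto_measure_iInter_atTop (fun j => (hTm j).nullMeasurableSet) _ ⟨0, hTfin 0⟩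
    intro i j hij x hx
    have h2 : m - 1 / ((j:ℝ) + 1) < u x := hx.2
    have : 1 / ((j:ℝ) + 1) ≤ 1 / ((i:ℝ) + 1) := by gcongr
    refine ⟨hx.1, ?_⟩
    change m - 1 / ((i:ℝ) + 1) < u x
    linarith
  have hempty : (⋂ j, T j) = ∅ := by
    rw [eq_empty_iff_forall_notMem]
    intro y hy
    rw [mem_iInter] at hy
    have hyb : y ∈ ball (0 : Euc n) r := (hy 0).1.1
    have hyS : y ∈ S := (hy 0).1.2
    have hyn : ‖y‖ ≤ r := by have := mem_ball_zero_iff.1 hyb; linarith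
    have hmy : m ≤ u y := by
      refine le_of_forall_pos_le_add fun ε hε => ?_
      obtain ⟨j, hj⟩ := exists_nat_one_div_lt hε
      have := (hy j).2
      simp only [mem_ofPred_eq] at this
      linarith
    have hloc : IsLocalMax u y := by
      filter_upwards [isOpen_ball.mem_nhds hyb] with z hz
      have := hmax' z (by have := mem_ball_zero_iff.1 hz; linarith)
      linarith
    apply hyS
    refine ⟨?_, by simp [gradient]⟩
    rw [gradient, hloc.fderiv_eq_zero, map_zero]
  rw [hempty, measure_empty] at hlim
  have hW : Tendsto (fun j : ℕ => 1 / ((j:ℝ) + 1)) atTop (nhds 0) :=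
    tendsto_one_div_add_atTop_nhds_zero_nat
  have ev1 : ∀ᶠ j : ℕ in atTop, 1 / ((j:ℝ) + 1) < m - M := hW.eventually (gt_mem_nhds (by linarith))
  have ev2 : ∀ᶠ j : ℕ in atTop, 1 / ((j:ℝ) + 1) < δ := hW.eventually (gt_mem_nhds hδ0)
  have ev3 : ∀ᶠ j : ℕ in atTop, volume (T j) < ENNReal.ofReal (c * δ ^ n / 2 ^ (n + 1)) :=
    hlim.eventually (gt_mem_nhds (by rw [ENNReal.ofReal_pos]; positivity))
  obtain ⟨j, h1, h2, h3⟩ := (ev1.and (ev2.and ev3)).exists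
  set W : ℝ := 1 / ((j:ℝ) + 1) with hWdef
  have hW0 : 0 < W := by positivity
  have hTr : volume.real (T j) ≤ c * δ ^ n / 2 ^ (n + 1) := by
    rw [measureReal_def]
    exact ENNReal.toReal_le_of_le_ofReal (by positivity) h3.le
  have hx0r : ‖x0‖ ≤ r := by simpa using hx0
  have hx0b : x0 ∈ ball (0 : Euc n) r := by
    rw [mem_ball_zero_iff]
    refine lt_of_le_of_ne hx0r fun h => ?_
    have := le_sphMax huc h
    linarith
  have hcoup : B * W * (W / δ) ^ α ≤ C₁ / 2 * (W / δ) ^ p := by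
    have hy : 0 < W / δ := by positivity
    have hy1 : W / δ ≤ 1 := by rw [div_le_one hδ0]; exact h2.le
    have e : (W / δ) ^ p = (W / δ) ^ (p - α) * (W / δ) ^ α := by
      rw [← Real.rpow_add hy]; congr 1; ring
    have h4 : W / δ ≤ (W / δ) ^ (p - α) := by
      have := Real.rpow_le_rpow_of_exponent_ge hy hy1 (show p - α ≤ 1 by linarith)
      rwa [Real.rpow_one] at this
    have h5 : B * W ≤ C₁ / 2 * (W / δ) := by
      have : B * W = B * δ * (W / δ) := by field_simp
      rw [this]; gcongr
    rw [e, ← mul_assoc]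
    apply mul_le_mul_of_nonneg_right _ (by positivity)
    calc B * W ≤ C₁ / 2 * (W / δ) := h5
      _ ≤ _ := by gcongr
  have hvW : ∀ x ∈ ball (0 : Euc n) r, u x - (m - W) ≤ W := fun x hx => by
    have := hmax' x (by have := mem_ball_zero_iff.1 hx; linarith)
    linarith
  have hfr : ∀ x ∈ frontier (ball (0 : Euc n) r), u x - (m - W) ≤ 0 := by
    intro x hx
    rw [frontier_ball _ hr.ne'] at hx
    have := le_sphMax huc (show ‖x‖ = r by simpa using hx)
    linarith
  obtain ⟨-, g2⟩ := hco A b a u hD (ball 0 r) (fun _ => m - W) (W / δ) W B 0 isOpen_ball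
    isBounded_ball contDiff_const hfr (by positivity) hW0.le hB_nonneg hvW
    (fun x _ => by
      have : gradient (fun _ : Euc n => m - W) x = 0 := by simp [gradient]
      rw [this, norm_zero]; positivity)
    (Eventually.of_forall fun x hx => (hB0 x (ball_subset_closedBall hx)).trans (le_max_left _ _))
    (Eventually.of_forall fun x _ _ => hD.ha x) hcoup le_rfl
  have hcont : Continuous (fun x => u x - (m - W)) := huc.sub continuous_const
  set w := tw (ball (0 : Euc n) r) (fun x => u x - (m - W)) with hw
  have hwc : Continuous w := tw_cont hcont hfr
  have hwcs : HasCompactSupport w := tw_compact isBounded_ball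
  have hw0 : ∀ x, 0 ≤ w x := fun x => tw_nonneg x
  have hIntg : ∫ x in S, w x ≤ W * volume.real (T j) := by
    rw [← integral_indicator hSm]
    calc ∫ x, S.indicator w x ≤ ∫ x, (T j).indicator (fun _ => W) x := by
          apply integral_mono ((hwc.integrable_of_hasCompactSupport hwcs).indicator hSm)
          · exact (integrable_indicator_iff (hTm j)).2 (integrableOn_const (hTfin j))
          · intro y
            by_cases hyT : y ∈ T j
            · rw [indicator_of_mem hyT, indicator_of_mem hyT.1.2, hw, tw,
                indicator_of_mem hyT.1.1]
              exact max_le (hvW y hyT.1.1) hW0.le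
            · rw [indicator_of_notMem hyT]
              by_cases hyS : y ∈ S
              · rw [indicator_of_mem hyS, hw, tw]
                by_cases hyb : y ∈ ball (0 : Euc n) r
                · rw [indicator_of_mem hyb]
                  refine max_le ?_ le_rfl
                  by_contra hc2
                  exact hyT ⟨⟨hyb, hyS⟩, by simp only [mem_ofPred_eq]; linarith⟩
                · rw [indicator_of_notMem hyb]
              · rw [indicator_of_notMem hyS]
      _ = _ := by
          rw [integral_indicator (hTm j), setIntegral_const, smul_eq_mul, mul_comm]
  have := g2 0 (W / 2) le_rfl (by positivity) (by
    rw [hSk]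
    have e : ∀ x, max (w x - 0) 0 = w x := fun x => by rw [sub_zero, max_eq_left (hw0 x)]
    simp only [e]
    calc (W / δ) ^ n * ∫ x in S, w x ≤ (W / δ) ^ n * (W * (c * δ ^ n / 2 ^ (n + 1))) := by
          gcongr; exact hIntg.trans (by gcongr)
      _ = c * (W / 2) ^ (n + 1) := by
          clear_value W δ
          rw [div_pow, div_pow, pow_succ W]; field_simp) x0
  have hwx : w x0 = W := by
    rw [hw, tw, indicator_of_mem hx0b]
    rw [max_eq_left (by linarith)]; linarith
  linarith

section Mfun
variable {n : ℕ} {u : Euc n → ℝ}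

lemma sphMax_mono (hn : 2 ≤ n) (hu : Continuous u)
    (hmp : ∀ r : ℝ, 0 < r → ∀ x : Euc n, ‖x‖ ≤ r → u x ≤ sphMax u r) :
    MonotoneOn (sphMax u) (Ioi 0) := by
  intro s hs t ht hst
  obtain ⟨x, hx, h⟩ := sphMax_exists hn hu (le_of_lt hs)
  rw [← h]
  exact hmp t ht x (by linarith)

lemma sphMax_cont (hn : 2 ≤ n) (hu : Continuous u) {s t : ℝ} (hs : 0 < s) :
    ContinuousOn (sphMax u) (Icc s t) := by
  rw [Metric.continuousOn_iff]
  intro r hr ε hε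
  have hK := isCompact_closedBall (0 : Euc n) t
  have huc := hK.uniformContinuousOn_of_continuous hu.continuousOn
  rw [Metric.uniformContinuousOn_iff] at huc
  obtain ⟨d, hd, huc⟩ := huc ε hε
  have key : ∀ r1 ∈ Icc s t, ∀ r2 ∈ Icc s t, dist r1 r2 < d → sphMax u r1 < sphMax u r2 + ε := by
    intro r1 h1 r2 h2 h12
    obtain ⟨x, hx, h⟩ := sphMax_exists hn hu (hs.le.trans h1.1)
    have hr1 : 0 < r1 := lt_of_lt_of_le hs h1.1
    have hr2 : 0 < r2 := lt_of_lt_of_le hs h2.1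
    set y := (r2 / r1) • x with hy
    have hyn : ‖y‖ = r2 := by
      rw [hy, norm_smul, Real.norm_eq_abs, abs_of_pos (by positivity), hx]; field_simp
    have hxy : dist x y < d := by
      have : x - y = (1 - r2 / r1) • x := by rw [hy, sub_smul, one_smul]
      rw [dist_eq_norm, this, norm_smul, Real.norm_eq_abs, hx]
      nth_rewrite 2 [← abs_of_pos hr1]
      rw [← abs_mul, sub_mul, div_mul_cancel₀ _ hr1.ne', one_mul, ← Real.dist_eq]
      exact h12
    have := huc x (by simp [hx, h1.2]) y (by simp [hyn, h2.2]) hxy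
    rw [Real.dist_eq, abs_lt] at this
    have h3 := le_sphMax hu hyn
    linarith
  refine ⟨d, hd, fun r' hr' hdist => ?_⟩
  rw [Real.dist_eq, abs_lt]
  have h1 := key r' hr' r hr hdist
  have h2 := key r hr r' hr' (by rwa [dist_comm])
  constructor <;> linarith

end Mfun

set_option maxHeartbeats 1000000 in
lemma substep {n : ℕ} (hn : 2 ≤ n) {p C₁ C₂ α σ : ℝ} (hp : 1 < p) (hC₁ : 0 < C₁) (hC₂ : 0 < C₂)
    (hα₁ : p - 1 ≤ α) (hα₂ : α ≤ p) (hσ : 1 < σ) : ∃ K : ℝ, 0 < K ∧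
    ∀ (A : Euc n → Euc n → Euc n) (b a u : Euc n → ℝ), Dat A b a u p C₁ C₂ α →
    (∀ r : ℝ, 0 < r → ∀ x : Euc n, ‖x‖ ≤ r → u x ≤ sphMax u r) →
    ∀ s t B H : ℝ, 0 < s → s < t → 0 < sphMax u s → sphMax u s < sphMax u t →
    sphMax u t ≤ σ * sphMax u s → 0 ≤ B → 0 ≤ H →
    (∀ᵐ x : Euc n, s < ‖x‖ → ‖x‖ < t → b x ≤ B) →
    (∀ᵐ x : Euc n, s < ‖x‖ → ‖x‖ < t → sphMax u s / σ < u x → H ≤ a x) →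
    ∀ (V0 : ℝ) (N : ℕ), V0 = (sphMax u t - sphMax u s) / (t - s) → 1 ≤ N →
    4 * (B * ((t - s) / N) * V0) ≤ C₁ * V0 ^ (p - α) →
    H * ((t - s) / N) ≤ K * V0 ^ (p - 1) := by
  obtain ⟨K, hK, hcore⟩ := core (κ := 1 / (σ + 1)) hn hp hC₁ hC₂ hα₁ hα₂ (by positivity)
  refine ⟨K * 2 ^ (p - 1) * 2 ^ p, by positivity, ?_⟩
  intro A b a u hD hmp s t B H hs hst hm hmm hσm hB hH hbB hah V0 N hV0 hN hcoup
  have huc := hD.hu.continuous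
  have hmono := sphMax_mono hn huc hmp
  set M := sphMax u with hM
  have hN0 : (0:ℝ) < N := by exact_mod_cast hN
  have hts : 0 < t - s := by linarith
  have hV0p : 0 < V0 := by rw [hV0]; apply div_pos <;> linarith
  set d := (t - s) / N with hd
  have hd0 : 0 < d := by positivity
  have hNd : N * d = t - s := by rw [hd]; field_simp
  have hVd : N * (V0 * d) = M t - M s := by
    rw [hV0, hd]; field_simp
  -- pigeonhole
  obtain ⟨j, hjN, hj⟩ : ∃ j ∈ Finset.range N,
      M (s + ((j + 1 : ℕ) : ℝ) * d) - M (s + (j : ℝ) * d) ≤ V0 * d := by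
    apply Finset.exists_le_of_sum_le (by simp; omega)
    rw [Finset.sum_range_sub (fun j : ℕ => M (s + (j : ℝ) * d))]
    simp only [Finset.sum_const, Finset.card_range, nsmul_eq_mul, Nat.cast_zero, zero_mul,
      add_zero, hNd, hVd]
    rw [show s + (t - s) = t by ring]
  have hjN' : j + 1 ≤ N := Finset.mem_range.1 hjN
  have hj1 : ((j + 1 : ℕ) : ℝ) * d ≤ t - s := by
    rw [← hNd]; gcongr
  have hj0 : 0 ≤ (j : ℝ) * d := by positivity
  have hje : ((j + 1 : ℕ) : ℝ) * d = j * d + d := by push_cast; ring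
  rw [hje] at hj hj1
  set R := s + j * d + d / 2 with hR
  obtain ⟨z, hz, hzM⟩ := sphMax_exists hn huc (show 0 ≤ R by positivity)
  set ω := V0 * d with hω
  have hω0 : 0 < ω := by positivity
  have h1 : M (s + j * d) ≤ u z := by
    rw [hzM]; exact hmono (by simp only [mem_Ioi]; linarith) (by simp only [mem_Ioi]; linarith)
      (by linarith)
  have h2 : M s ≤ M (s + j * d) :=
    hmono hs (by simp only [mem_Ioi]; linarith) (by linarith)
  have hωm : ω ≤ M t - M s := by
    rw [← hVd]
    have : (1:ℝ) ≤ N := by exact_mod_cast hN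
    nlinarith
  have hℓ : M s / σ ≤ u z - ω / σ := by
    have : M s / σ + ω / σ ≤ M s := by
      rw [← add_div, div_le_iff₀ (by linarith)]; nlinarith
    linarith
  have hbn : ∀ x ∈ ball z (d / 2), s < ‖x‖ ∧ ‖x‖ < t := by
    intro x hx
    rw [mem_ball, dist_eq_norm] at hx
    have h3 := norm_sub_norm_le z x
    have h4 := norm_sub_norm_le x z
    rw [norm_sub_rev] at h3
    constructor <;> linarith
  have hcore' := hcore A b a u hD z (d / 2) (ω + ω / σ) (u z - ω / σ) B H (by positivity)
    (by positivity) hB hH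
    (by filter_upwards [hbB] with x hx h3 using hx (hbn x h3).1 (hbn x h3).2)
    (by filter_upwards [hah] with x hx h3 h4
        exact hx (hbn x h3).1 (hbn x h3).2 (by linarith))
    (by
      intro x hx
      rw [mem_closedBall, dist_eq_norm] at hx
      have h4 := norm_sub_norm_le x z
      have := hmp (s + (j * d + d)) (by linarith) x (by linarith)
      linarith)
    (by
      have : 1 / (σ + 1) * (ω + ω / σ) = ω / σ := by field_simp
      linarith)
    (by
      set χ := 1 + 1 / σ with hχ
      have hχ1 : 1 ≤ χ := by rw [hχ]; have : 0 ≤ 1 / σ := by positivity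
                             linarith
      have hχ2 : χ ≤ 2 := by
        have : 1 / σ ≤ 1 := by rw [div_le_one (by linarith)]; linarith
        linarith
      have e1 : (ω + ω / σ) = V0 * d * χ := by rw [hω, hχ]; ring
      have e2 : (ω + ω / σ) / (d / 2) = 2 * χ * V0 := by rw [e1]; field_simp
      rw [e2, e1]
      have hρ : 0 < 2 * χ * V0 := by positivity
      have e3 : (2 * χ * V0) ^ p = (2 * χ * V0) ^ (p - α) * (2 * χ * V0) ^ α := by
        rw [← Real.rpow_add hρ]; congr 1; ring
      rw [e3, ← mul_assoc (C₁ / 2)]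
      apply mul_le_mul_of_nonneg_right _ (by positivity)
      have h5 : V0 ^ (p - α) ≤ (2 * χ * V0) ^ (p - α) :=
        Real.rpow_le_rpow hV0p.le (by nlinarith) (by linarith)
      have h6 : B * (V0 * d) * χ ≤ B * (V0 * d) * 2 := by gcongr
      have h7 : C₁ * V0 ^ (p - α) ≤ C₁ * (2 * χ * V0) ^ (p - α) := by gcongr
      nlinarith)
  have hW2 : ω + ω / σ ≤ 2 * V0 * d := by
    have : ω / σ ≤ ω := div_le_self hω0.le hσ.le
    rw [hω] at *; linarith
  have h8 : (ω + ω / σ) ^ (p - 1) ≤ 2 ^ (p - 1) * V0 ^ (p - 1) * d ^ (p - 1) := by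
    rw [← Real.mul_rpow (by positivity) hV0p.le, ← Real.mul_rpow (by positivity) hd0.le]
    exact Real.rpow_le_rpow (by positivity) hW2 (by linarith)
  have e4 : (d / 2) ^ p = d * d ^ (p - 1) / 2 ^ p := by
    rw [Real.div_rpow hd0.le (by norm_num), mul_comm d, ← Real.rpow_add_one hd0.ne']
    congr 2; ring
  rw [e4] at hcore'
  have hdp : 0 < d ^ (p - 1) := by positivity
  have h2p : (0:ℝ) < 2 ^ p := by positivity
  have h9 : (H * d) * (d ^ (p - 1) / 2 ^ p) ≤
      (K * 2 ^ (p - 1) * 2 ^ p * V0 ^ (p - 1)) * (d ^ (p - 1) / 2 ^ p) := by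
    calc _ = H * (d * d ^ (p - 1) / 2 ^ p) := by ring
      _ ≤ _ := hcore'
      _ ≤ K * (2 ^ (p - 1) * V0 ^ (p - 1) * d ^ (p - 1)) := by gcongr
      _ = _ := by field_simp
  exact le_of_mul_le_mul_right h9 (by positivity)

set_option maxHeartbeats 1000000 in
lemma step {n : ℕ} (hn : 2 ≤ n) {p C₁ C₂ α σ : ℝ} (hp : 1 < p) (hC₁ : 0 < C₁) (hC₂ : 0 < C₂)
    (hα₁ : p - 1 ≤ α) (hα₂ : α ≤ p) (hσ : 1 < σ) : ∃ K : ℝ, 0 < K ∧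
    ∀ (A : Euc n → Euc n → Euc n) (b a u : Euc n → ℝ), Dat A b a u p C₁ C₂ α →
    (∀ r : ℝ, 0 < r → ∀ x : Euc n, ‖x‖ ≤ r → u x ≤ sphMax u r) →
    ∀ s t B H : ℝ, 0 < s → s < t → 0 < sphMax u s → sphMax u s < sphMax u t →
    sphMax u t ≤ σ * sphMax u s → 0 ≤ B → 0 ≤ H →
    (∀ᵐ x : Euc n, s < ‖x‖ → ‖x‖ < t → b x ≤ B) →
    (∀ᵐ x : Euc n, s < ‖x‖ → ‖x‖ < t → sphMax u s / σ < u x → H ≤ a x) →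
    H * (t - s) ^ p ≤ K * sphMax u s ^ (p - 1) ∨
      H * (t - s) ^ α ≤ K * B * sphMax u s ^ α := by
  obtain ⟨K, hK, hsub⟩ := substep hn hp hC₁ hC₂ hα₁ hα₂ hσ
  have hσ1 : 0 < σ - 1 := by linarith
  refine ⟨K * (σ - 1) ^ (p - 1) + 8 * K / C₁ * (σ - 1) ^ α, by positivity, ?_⟩
  intro A b a u hD hmp s t B H hs hst hm hmm hσm hB hH hbB hah
  have hsub := hsub A b a u hD hmp s t B H hs hst hm hmm hσm hB hH hbB hah
    ((sphMax u t - sphMax u s) / (t - s))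
  set m := sphMax u s with hmdef
  set m' := sphMax u t with hm'
  have hts : 0 < t - s := by linarith
  set Δ := t - s with hΔ
  set V0 := (m' - m) / Δ with hV0
  have hV0p : 0 < V0 := by rw [hV0]; apply div_pos <;> linarith
  have hVle : V0 * Δ ≤ (σ - 1) * m := by rw [hV0, div_mul_cancel₀ _ hts.ne']; linarith
  have hVle' : ∀ e : ℝ, 0 ≤ e → V0 ^ e * Δ ^ e ≤ (σ - 1) ^ e * m ^ e := by
    intro e he
    rw [← Real.mul_rpow hV0p.le hts.le, ← Real.mul_rpow hσ1.le hm.le]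
    exact Real.rpow_le_rpow (by positivity) hVle he
  have hVpa : 0 < V0 ^ (p - α) := by positivity
  set E := C₁ * V0 ^ (p - α) / (4 * V0) with hE
  have hE0 : 0 < E := by positivity
  have hEe : ∀ y : ℝ, B * y ≤ E → 4 * (B * y * V0) ≤ C₁ * V0 ^ (p - α) := by
    intro y hy
    have : E * (4 * V0) = C₁ * V0 ^ (p - α) := by rw [hE]; field_simp
    rw [← this]; nlinarith
  rcases le_or_gt (B * Δ) E with hc | hc
  · left
    have h1 := hsub 1 rfl le_rfl (by simpa using hEe Δ hc)
    rw [Nat.cast_one, div_one] at h1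
    have e1 : Δ ^ p = Δ * Δ ^ (p - 1) := by
      rw [mul_comm, ← Real.rpow_add_one hts.ne']; congr 1; ring
    have hr : 0 ≤ 8 * K / C₁ * (σ - 1) ^ α * m ^ (p - 1) := by positivity
    calc H * Δ ^ p = H * Δ * Δ ^ (p - 1) := by rw [e1]; ring
      _ ≤ K * V0 ^ (p - 1) * Δ ^ (p - 1) := by gcongr
      _ = K * (V0 ^ (p - 1) * Δ ^ (p - 1)) := by ring
      _ ≤ K * ((σ - 1) ^ (p - 1) * m ^ (p - 1)) := mul_le_mul_of_nonneg_left (hVle' (p - 1) (by linarith)) hK.le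
      _ ≤ _ := by linarith
  · right
    have hB0 : 0 < B := by
      by_contra hcon
      have : B = 0 := by linarith
      rw [this] at hc; linarith
    set y := B * Δ / E with hy
    have hy1 : 1 < y := by rw [hy, lt_div_iff₀ hE0]; linarith
    set N := ⌈y⌉₊ with hN
    have hNy : y ≤ N := Nat.le_ceil y
    have hNy2 : (N:ℝ) < y + 1 := Nat.ceil_lt_add_one (by linarith)
    have hN0 : (0:ℝ) < N := by linarith
    have hyE : y * E = B * Δ := by rw [hy]; field_simp
    have h1 := hsub N rfl (by exact_mod_cast Nat.one_le_iff_ne_zero.2 (by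
        intro h; rw [h] at hN0; simp at hN0)) (hEe _ (by
        rw [← mul_div_assoc, div_le_iff₀ hN0, ← hyE]; nlinarith))
    have h2 : E / (2 * B) ≤ Δ / N := by
      rw [div_le_div_iff₀ (by positivity) hN0]
      nlinarith
    have h3 : H * (E / (2 * B)) ≤ K * V0 ^ (p - 1) := (by gcongr : _ ≤ H * (Δ / N)).trans h1
    have e2 : V0 ^ α = V0 ^ (p - 1) * V0 / V0 ^ (p - α) := by
      rw [← Real.rpow_add_one hV0p.ne', ← Real.rpow_sub hV0p]; congr 1; ring
    have h4 : H ≤ 8 * K / C₁ * B * V0 ^ α := by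
      have e3 : H * (E / (2 * B)) = H * (C₁ * V0 ^ (p - α) / (8 * V0 * B)) := by
        rw [hE]; field_simp; ring
      rw [e3] at h3
      have hpos : 0 < C₁ * V0 ^ (p - α) / (8 * V0 * B) := by positivity
      refine le_of_mul_le_mul_right (h3.trans (le_of_eq ?_)) hpos
      rw [e2]; field_simp
    have hr : 0 ≤ K * (σ - 1) ^ (p - 1) * B * m ^ α := by positivity
    have hr2 := hVle' α (by linarith)
    calc H * Δ ^ α ≤ 8 * K / C₁ * B * V0 ^ α * Δ ^ α := by gcongr
      _ = 8 * K / C₁ * B * (V0 ^ α * Δ ^ α) := by ring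
      _ ≤ 8 * K / C₁ * B * ((σ - 1) ^ α * m ^ α) := by gcongr
      _ ≤ _ := by linarith

section ginfsec
variable {g : ℝ → ℝ} {η : ℝ}

lemma g_lower (hgc : ContinuousOn g (Ici 0)) (hgp : ∀ t : ℝ, 0 < t → 0 < g t) {x y : ℝ}
    (hx : 0 < x) : ∃ ε, 0 < ε ∧ ∀ s ∈ Icc x y, ε ≤ g s := by
  rcases le_or_gt x y with h | h
  · obtain ⟨z, hz, hmin⟩ := isCompact_Icc.exists_isMinOn (nonempty_Icc.2 h)
      (hgc.mono (fun s (hs : s ∈ Icc x y) => le_trans hx.le hs.1))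
    exact ⟨g z, hgp z (lt_of_lt_of_le hx hz.1), fun s hs => hmin hs⟩
  · exact ⟨1, one_pos, fun s hs => absurd (hs.1.trans hs.2) (not_le.2 h)⟩

lemma ginf_le (hη : 1 < η) (hg0 : ∀ t ∈ Ici (0 : ℝ), 0 ≤ g t) {t x : ℝ} (ht : 0 < t)
    (hx : x ∈ Ioo (t / η) (η * t)) : ginf g η t ≤ g x := by
  apply csInf_le _ (mem_image_of_mem g hx)
  refine ⟨0, ?_⟩
  rintro _ ⟨y, hy, rfl⟩
  have : 0 < t / η := by positivity
  exact hg0 y (this.le.trans hy.1.le)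

lemma Ioo_nonempty' (hη : 1 < η) {t : ℝ} (ht : 0 < t) : t ∈ Ioo (t / η) (η * t) :=
  ⟨div_lt_self ht hη, by nlinarith⟩

lemma le_ginf (hη : 1 < η) {t c : ℝ} (ht : 0 < t)
    (h : ∀ x ∈ Ioo (t / η) (η * t), c ≤ g x) : c ≤ ginf g η t := by
  apply le_csInf ⟨g t, mem_image_of_mem g (Ioo_nonempty' hη ht)⟩
  rintro _ ⟨y, hy, rfl⟩
  exact h y hy

lemma ginf_lower (hη : 1 < η) (hgc : ContinuousOn g (Ici 0)) (hgp : ∀ t : ℝ, 0 < t → 0 < g t)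
    {x y : ℝ} (hx : 0 < x) : ∃ ε, 0 < ε ∧ ∀ s ∈ Icc x y, ε ≤ ginf g η s := by
  obtain ⟨ε, hε, h⟩ := g_lower (y := η * y) hgc hgp (show 0 < x / η by positivity)
  refine ⟨ε, hε, fun s hs => le_ginf hη (lt_of_lt_of_le hx hs.1) fun z hz => h z ⟨?_, ?_⟩⟩
  · have : x / η ≤ s / η := by gcongr; exact hs.1
    linarith [hz.1]
  · have : η * s ≤ η * y := by gcongr; exact hs.2
    linarith [hz.2]

lemma ginf_meas (hη : 1 < η) (hg0 : ∀ t ∈ Ici (0 : ℝ), 0 ≤ g t) :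
    Measurable ((Ioi (0:ℝ)).indicator (ginf g η)) := by
  apply measurable_of_Iio
  intro y
  have h1 : MeasurableSet (Ioi (0:ℝ) ∩ {t | ginf g η t < y}) := by
    have : Ioi (0:ℝ) ∩ {t | ginf g η t < y} =
        Ioi (0:ℝ) ∩ ⋃ x ∈ {x : ℝ | g x < y}, {t : ℝ | t / η < x ∧ x < η * t} := by
      ext t
      constructor
      · rintro ⟨ht, h⟩
        refine ⟨ht, ?_⟩
        obtain ⟨_, ⟨x, hx, rfl⟩, hlt⟩ := exists_lt_of_csInf_lt
          ⟨g t, mem_image_of_mem g (Ioo_nonempty' hη ht)⟩ h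
        exact mem_iUnion₂.2 ⟨x, hlt, hx⟩
      · rintro ⟨ht, h⟩
        obtain ⟨x, hx, hxt⟩ := mem_iUnion₂.1 h
        exact ⟨ht, lt_of_le_of_lt (ginf_le hη hg0 ht hxt) hx⟩
    rw [this]
    apply (isOpen_Ioi.inter (isOpen_biUnion fun x _ => ?_)).measurableSet
    exact (isOpen_lt (continuous_id.div_const η) continuous_const).inter
      (isOpen_lt continuous_const (continuous_const.mul continuous_id))
  by_cases hy : 0 < y
  · have : (Ioi (0:ℝ)).indicator (ginf g η) ⁻¹' Iio y =
        (Ioi (0:ℝ) ∩ {t | ginf g η t < y}) ∪ Iic 0 := by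
      ext t
      by_cases ht : 0 < t
      · simp [indicator, ht, ht.not_ge]
      · simp [indicator, ht, not_lt.1 ht, hy]
    rw [this]; exact h1.union measurableSet_Iic
  · have : (Ioi (0:ℝ)).indicator (ginf g η) ⁻¹' Iio y =
        (Ioi (0:ℝ) ∩ {t | ginf g η t < y}) := by
      ext t
      by_cases ht : 0 < t
      · simp [indicator, ht]
      · simp [indicator, ht, not_lt.1 hy]
    rw [this]; exact h1

lemma ginf_aem (hη : 1 < η) (hg0 : ∀ t ∈ Ici (0 : ℝ), 0 ≤ g t) {x y : ℝ} (hx : 0 < x) :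
    AEMeasurable (ginf g η) (volume.restrict (Ioc x y)) := by
  refine ⟨_, ginf_meas hη hg0, ?_⟩
  filter_upwards [ae_restrict_mem measurableSet_Ioc] with t ht
  rw [indicator_of_mem (show t ∈ Ioi (0:ℝ) from hx.trans ht.1)]

lemma int_phi2 (hη : 1 < η) (hgc : ContinuousOn g (Ici 0))
    (hg0 : ∀ t ∈ Ici (0 : ℝ), 0 ≤ g t) (hgp : ∀ t : ℝ, 0 < t → 0 < g t) {α : ℝ} (hα : 0 < α)
    {x y : ℝ} (hx : 0 < x) :
    IntegrableOn (fun t => ginf g η t ^ (-(1 / α))) (Ioc x y) := by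
  obtain ⟨ε, hε, h⟩ := ginf_lower (y := y) hη hgc hgp hx
  refine Integrable.of_bound
    ((ginf_aem hη hg0 hx).pow_const _).aestronglyMeasurable (ε ^ (-(1 / α))) ?_
  filter_upwards [ae_restrict_mem measurableSet_Ioc] with t ht
  have h1 := h t ⟨ht.1.le, ht.2⟩
  rw [Real.norm_eq_abs, abs_of_nonneg (Real.rpow_nonneg (by linarith) _)]
  exact Real.rpow_le_rpow_of_nonpos hε h1 (by simp [hα.le])

lemma int_phi1 (hη : 1 < η) (hgc : ContinuousOn g (Ici 0))
    (hg0 : ∀ t ∈ Ici (0 : ℝ), 0 ≤ g t) (hgp : ∀ t : ℝ, 0 < t → 0 < g t) {p : ℝ} (hp : 0 < p)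
    {x y : ℝ} (hx : 0 < x) :
    IntegrableOn (fun t => (ginf g η t * t) ^ (-(1 / p))) (Ioc x y) := by
  obtain ⟨ε, hε, h⟩ := ginf_lower (y := y) hη hgc hgp hx
  refine Integrable.of_bound
    (((ginf_aem hη hg0 hx).mul aemeasurable_id).pow_const _).aestronglyMeasurable
    ((ε * x) ^ (-(1 / p))) ?_
  filter_upwards [ae_restrict_mem measurableSet_Ioc] with t ht
  have h1 := h t ⟨ht.1.le, ht.2⟩
  have ht0 : 0 < t := hx.trans ht.1
  rw [Real.norm_eq_abs, abs_of_nonneg (Real.rpow_nonneg (mul_nonneg (by linarith) ht0.le) _)]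
  refine Real.rpow_le_rpow_of_nonpos (by positivity) ?_ (by simp [hp.le])
  exact mul_le_mul h1 ht.1.le hx.le (by linarith)

lemma setInt_lower {f : ℝ → ℝ} {x y c : ℝ} (hxy : x ≤ y) (hf : IntegrableOn f (Ioc x y))
    (h : ∀ t ∈ Ioc x y, c ≤ f t) : (y - x) * c ≤ ∫ t in Ioc x y, f t := by
  have h1 : ∫ _ in Ioc x y, c = (y - x) * c := by
    rw [setIntegral_const]; simp [measureReal_def, hxy]
  rw [← h1]
  exact setIntegral_mono_on (integrableOn_const (by simp)) hf measurableSet_Ioc h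

end ginfsec

lemma sumlemma {M Ψ : ℝ → ℝ} {r₁ r₂ L : ℝ} (hL : 1 < L)
    (hM : ContinuousOn M (Icc r₁ r₂)) (hpos : ∀ s ∈ Icc r₁ r₂, 0 < M s)
    (hΨ : ∀ x y : ℝ, 0 < x → IntegrableOn Ψ (Ioc x y))
    (hstep : ∀ s ∈ Icc r₁ r₂, ∀ t ∈ Icc r₁ r₂, s < t → L * M s ≤ M t → M t ≤ L ^ 2 * M s →
      t - s ≤ ∫ y in Ioc (M s) (M t), Ψ y) (k : ℕ) :
    ∀ s ∈ Icc r₁ r₂, ∀ t ∈ Icc r₁ r₂, s < t → L * M s ≤ M t → M t ≤ L ^ (k + 2) * M s →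
      t - s ≤ ∫ y in Ioc (M s) (M t), Ψ y := by
  induction k with
  | zero => simpa using hstep
  | succ k ih =>
    intro s hs t ht hst h1 h2
    by_cases h3 : M t ≤ L ^ 2 * M s
    · exact hstep s hs t ht hst h1 h3
    push Not at h3
    have hms := hpos s hs
    have hlt : M s < L * M s := by nlinarith
    have hcont : ContinuousOn M (Icc s t) := hM.mono (Icc_subset_Icc hs.1 ht.2)
    obtain ⟨t', ht', he⟩ := intermediate_value_Icc hst.le hcont (show L * M s ∈ Icc (M s) (M t) from
      ⟨hlt.le, h1⟩)
    have hst' : s < t' := by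
      refine lt_of_le_of_ne ht'.1 fun h => ?_
      rw [← h] at he; linarith
    have hL2 : L * M s < L ^ 2 * M s := by nlinarith
    have ht't : t' < t := by
      refine lt_of_le_of_ne ht'.2 fun h => ?_
      rw [h] at he; linarith
    have ht'r : t' ∈ Icc r₁ r₂ := ⟨hs.1.trans ht'.1, ht'.2.trans ht.2⟩
    have a1 := hstep s hs t' ht'r hst' he.ge (by rw [he]; exact hL2.le)
    have a2 := ih t' ht'r t ht ht't (by rw [he]; nlinarith) (by
      rw [he]; calc M t ≤ _ := h2
        _ = _ := by ring)
    have hun : Ioc (M s) (M t) = Ioc (M s) (M t') ∪ Ioc (M t') (M t) :=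
      (Ioc_union_Ioc_eq_Ioc (by linarith) (by linarith)).symm
    rw [hun, setIntegral_union (Ioc_disjoint_Ioc_of_le le_rfl) measurableSet_Ioc
      (hΨ _ _ hms) (hΨ _ _ (hpos t' ht'r))]
    linarith

set_option maxHeartbeats 1000000 in
lemma stepint {n : ℕ} (hn : 2 ≤ n) {p C₁ C₂ α σ η L : ℝ} (hp : 1 < p) (hC₁ : 0 < C₁)
    (hC₂ : 0 < C₂) (hα₁ : p - 1 ≤ α) (hα₂ : α ≤ p) (hσ : 1 < σ) (hL : 1 < L)
    (hση : σ ^ 2 = η) : ∃ K : ℝ, 0 < K ∧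
    ∀ (A : Euc n → Euc n → Euc n) (b q u : Euc n → ℝ) (g : ℝ → ℝ),
    Dat A b (fun x => q x * g (u x)) u p C₁ C₂ α →
    (∀ x, 0 ≤ u x) →
    ContinuousOn g (Set.Ici 0) → (∀ t ∈ Set.Ici (0 : ℝ), 0 ≤ g t) →
    (∀ t : ℝ, 0 < t → 0 < g t) →
    (∀ r : ℝ, 0 < r → ∀ x : Euc n, ‖x‖ ≤ r → u x ≤ sphMax u r) →
    ∀ s t B Q : ℝ, 0 < s → s < t → 0 < sphMax u s → L * sphMax u s ≤ sphMax u t →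
    sphMax u t ≤ σ * sphMax u s → 0 ≤ B → 0 < Q →
    (∀ᵐ x : Euc n, s < ‖x‖ → ‖x‖ < t → b x ≤ B) →
    (∀ᵐ x : Euc n, s < ‖x‖ → ‖x‖ < t → Q ≤ q x) →
    t - s ≤ K * (Q ^ (-(1 / p)) * (∫ y in Ioc (sphMax u s) (sphMax u t), (ginf g η y * y) ^ (-(1 / p)))
      + (B / Q) ^ (1 / α) * ∫ y in Ioc (sphMax u s) (sphMax u t), ginf g η y ^ (-(1 / α))) := by
  obtain ⟨K, hK, hst⟩ := step hn hp hC₁ hC₂ hα₁ hα₂ hσ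
  have hL1 : 0 < L - 1 := by linarith
  have hp0 : 0 < p := by linarith
  have hα0 : 0 < α := by linarith
  refine ⟨(K * σ) ^ (1 / p) / (L - 1) + K ^ (1 / α) / (L - 1), by positivity, ?_⟩
  intro A b q u g hD hu0 hgc hg0 hgp hmp s t B Q hs hlt hm hLm hσm hB hQ hbB hqQ
  have hη : 1 < η := by rw [← hση]; nlinarith
  set m := sphMax u s with hmd
  set m' := sphMax u t with hmd'
  have hmm : m < m' := by nlinarith
  set G := sInf (g '' Ioc (m / σ) m') with hG
  have hmσ : 0 < m / σ := by positivity
  have hmσ' : m / σ < m' := (div_lt_self hm hσ).trans hmm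
  have hGle : ∀ y ∈ Ioc (m / σ) m', G ≤ g y := by
    intro y hy
    apply csInf_le _ (mem_image_of_mem g hy)
    refine ⟨0, ?_⟩
    rintro _ ⟨z, hz, rfl⟩
    exact hg0 z (hmσ.le.trans hz.1.le)
  have hGne : (g '' Ioc (m / σ) m').Nonempty := ⟨g m', mem_image_of_mem g ⟨hmσ', le_rfl⟩⟩
  have hG0 : 0 < G := by
    obtain ⟨ε, hε, h⟩ := g_lower (y := m') hgc hgp hmσ
    refine lt_of_lt_of_le hε (le_csInf hGne ?_)
    rintro _ ⟨z, hz, rfl⟩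
    exact h z ⟨hz.1.le, hz.2⟩
  have hgi : ∀ y ∈ Ioc m m', ginf g η y ≤ G := by
    intro y hy
    apply le_csInf hGne
    rintro _ ⟨z, hz, rfl⟩
    have hy0 : 0 < y := hm.trans hy.1
    apply ginf_le hη hg0 hy0
    constructor
    · refine lt_of_le_of_lt ?_ hz.1
      rw [← hση, div_le_div_iff₀ (by positivity) (by positivity)]
      have : y ≤ σ * m := hy.2.trans hσm
      nlinarith
    · have h1 : z ≤ σ * m := hz.2.trans hσm
      have h2 : σ * m ≤ η * m := by rw [← hση]; nlinarith
      have h3 : η * m < η * y := by have := hy.1; gcongr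
      linarith
  have hgpos : ∀ y ∈ Ioc m m', 0 < ginf g η y := by
    intro y hy
    obtain ⟨ε, hε, h⟩ := ginf_lower (y := m') hη hgc hgp hm
    exact lt_of_lt_of_le hε (h y ⟨hy.1.le, hy.2⟩)
  have hI : (m' - m) * (G * (σ * m)) ^ (-(1 / p)) ≤
      ∫ y in Ioc m m', (ginf g η y * y) ^ (-(1 / p)) := by
    apply setInt_lower hmm.le (int_phi1 hη hgc hg0 hgp hp0 hm)
    intro y hy
    have hy0 : 0 < y := hm.trans hy.1
    refine Real.rpow_le_rpow_of_nonpos (mul_pos (hgpos y hy) hy0) ?_ (by simp [hp0.le])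
    exact mul_le_mul (hgi y hy) (hy.2.trans hσm) hy0.le hG0.le
  have hJ : (m' - m) * G ^ (-(1 / α)) ≤ ∫ y in Ioc m m', ginf g η y ^ (-(1 / α)) := by
    apply setInt_lower hmm.le (int_phi2 hη hgc hg0 hgp hα0 hm)
    intro y hy
    exact Real.rpow_le_rpow_of_nonpos (hgpos y hy) (hgi y hy) (by simp [hα0.le])
  set I := ∫ y in Ioc m m', (ginf g η y * y) ^ (-(1 / p)) with hId
  set J := ∫ y in Ioc m m', ginf g η y ^ (-(1 / α)) with hJd
  have hI' : (L - 1) * m * (G * (σ * m)) ^ (-(1 / p)) ≤ I := by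
    refine le_trans ?_ hI
    apply mul_le_mul_of_nonneg_right _ (by positivity); linarith
  have hJ' : (L - 1) * m * G ^ (-(1 / α)) ≤ J := by
    refine le_trans ?_ hJ
    apply mul_le_mul_of_nonneg_right _ (by positivity); linarith
  have hI0 : 0 ≤ I := le_trans (by positivity) hI'
  have hJ0 : 0 ≤ J := le_trans (by positivity) hJ'
  have hts : 0 < t - s := by linarith
  have hBQ : 0 ≤ B / Q := by positivity
  have hstep := hst A b _ u hD hmp s t B (Q * G) hs hlt hm hmm hσm hB (by positivity) hbB (by
    filter_upwards [hqQ] with x hx h1 h2 h3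
    have h4 := hx h1 h2
    have h5 : u x ≤ m' := hmp t (by linarith) x h2.le
    exact mul_le_mul h4 (hGle _ ⟨h3, h5⟩) hG0.le (by linarith))
  have eroot : ∀ e : ℝ, 0 < e → ∀ y : ℝ, 0 ≤ y → (y ^ e) ^ (1 / e) = y := by
    intro e he y hy
    rw [← Real.rpow_mul hy, mul_one_div_cancel he.ne', Real.rpow_one]
  rcases hstep with hc | hc
  · have h1 : (t - s) ^ p ≤ (K * σ) * (Q⁻¹ * (m ^ p * (G * (σ * m))⁻¹)) := by
      have e1 : m ^ p = m ^ (p - 1) * m := by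
        rw [← Real.rpow_add_one hm.ne']; congr 1; ring
      have hQG : 0 < Q * G := by positivity
      have : (t - s) ^ p ≤ K * m ^ (p - 1) / (Q * G) := by
        rw [le_div_iff₀ hQG]; linarith
      refine this.trans (le_of_eq ?_)
      rw [e1]; field_simp
    have h2 := Real.rpow_le_rpow (by positivity) h1 (show 0 ≤ 1 / p by positivity)
    rw [eroot p hp0 _ hts.le, Real.mul_rpow (by positivity) (by positivity),
      Real.mul_rpow (x := Q⁻¹) (by positivity) (by positivity),
      Real.mul_rpow (x := m ^ p) (by positivity) (by positivity),
      eroot p hp0 _ hm.le, Real.inv_rpow hQ.le, ← Real.rpow_neg hQ.le,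
      Real.inv_rpow (by positivity), ← Real.rpow_neg (by positivity)] at h2
    have h3 : m * (G * (σ * m)) ^ (-(1 / p)) ≤ I / (L - 1) := by
      rw [le_div_iff₀ hL1]; linarith
    have hr : 0 ≤ ((K * σ) ^ (1 / p) / (L - 1)) * ((B / Q) ^ (1 / α) * J) +
        K ^ (1 / α) / (L - 1) * (Q ^ (-(1 / p)) * I + (B / Q) ^ (1 / α) * J) := by positivity
    calc t - s ≤ _ := h2
      _ ≤ (K * σ) ^ (1 / p) * (Q ^ (-(1 / p)) * (I / (L - 1))) := by gcongr
      _ = (K * σ) ^ (1 / p) / (L - 1) * (Q ^ (-(1 / p)) * I) := by ring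
      _ ≤ _ := by linarith
  · have h1 : (t - s) ^ α ≤ K * ((B / Q) * (m ^ α * G⁻¹)) := by
      have hQG : 0 < Q * G := by positivity
      have : (t - s) ^ α ≤ K * B * m ^ α / (Q * G) := by
        rw [le_div_iff₀ hQG]; linarith
      refine this.trans (le_of_eq ?_)
      field_simp
    have h2 := Real.rpow_le_rpow (by positivity) h1 (show 0 ≤ 1 / α by positivity)
    rw [eroot α hα0 _ hts.le, Real.mul_rpow (by positivity) (by positivity),
      Real.mul_rpow (x := B / Q) (by positivity) (by positivity),
      Real.mul_rpow (x := m ^ α) (by positivity) (by positivity),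
      eroot α hα0 _ hm.le, Real.inv_rpow hG0.le, ← Real.rpow_neg hG0.le] at h2
    have h3 : m * G ^ (-(1 / α)) ≤ J / (L - 1) := by
      rw [le_div_iff₀ hL1]; linarith
    have hr : 0 ≤ (K ^ (1 / α) / (L - 1)) * (Q ^ (-(1 / p)) * I) +
        (K * σ) ^ (1 / p) / (L - 1) * (Q ^ (-(1 / p)) * I + (B / Q) ^ (1 / α) * J) := by positivity
    calc t - s ≤ _ := h2
      _ ≤ K ^ (1 / α) * ((B / Q) ^ (1 / α) * (J / (L - 1))) := by gcongr
      _ = K ^ (1 / α) / (L - 1) * ((B / Q) ^ (1 / α) * J) := by ring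
      _ ≤ _ := by linarith

lemma loc_int {n : ℕ} {E : Type*} [NormedAddCommGroup E] {F : Euc n → E}
    (hF : AEStronglyMeasurable F volume)
    (h : ∀ K : Set (Euc n), IsCompact K → ∃ C, ∀ x ∈ K, ‖F x‖ ≤ C) : LocallyIntegrable F := by
  rw [locallyIntegrable_iff]
  intro K hK
  obtain ⟨C, hC⟩ := h K hK
  refine Measure.integrableOn_of_bounded (M := C) hK.measure_lt_top.ne hF ?_
  exact (ae_restrict_iff' hK.measurableSet).2 (Eventually.of_forall hC)

lemma mkDat {n : ℕ} {p C₁ C₂ α : ℝ} (hp : 1 < p) (hC₂ : 0 < C₂) (hα₁ : p - 1 ≤ α)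
    {A : Euc n → Euc n → Euc n} (hA : StructCond A p C₁ C₂)
    {b : Euc n → ℝ} (hbm : Measurable b) (hb0 : ∀ x, 0 ≤ b x) (hbl : LocBdd b)
    {q : Euc n → ℝ} (hqm : Measurable q) (hq0 : ∀ x, 0 ≤ q x) (hql : LocBdd q)
    {g : ℝ → ℝ} (hgc : ContinuousOn g (Set.Ici 0)) (hg0 : ∀ t ∈ Set.Ici (0 : ℝ), 0 ≤ g t)
    {u : Euc n → ℝ} (hu : ContDiff ℝ 1 u) (hu0 : ∀ x, 0 ≤ u x)
    (hw : IsWeakSol A b α (fun x => q x * g (u x)) Set.univ u) :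
    Dat A b (fun x => q x * g (u x)) u p C₁ C₂ α := by
  have hgr := continuous_gradient hu
  have hgu : Continuous (fun x => g (u x)) := hgc.comp_continuous hu.continuous hu0
  have hα0 : 0 < α := by linarith
  have liA : LocallyIntegrable (fun x => A x (gradient u x)) := by
    apply loc_int
    · exact (hA.1.comp (measurable_id.prodMk hgr.measurable)).aestronglyMeasurable
    · intro K hK
      have hc : Continuous (fun x => C₂ * ‖gradient u x‖ ^ (p - 1)) :=
        continuous_const.mul (hgr.norm.rpow_const fun x => Or.inr (by linarith))
      obtain ⟨C, hC⟩ := hK.exists_bound_of_continuousOn hc.continuousOn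
      exact ⟨C, fun x hx => ((hA.2 x _).2.trans (le_abs_self _)).trans (hC x hx)⟩
  have lia : LocallyIntegrable (fun x => q x * g (u x)) := by
    apply loc_int
    · exact (hqm.mul hgu.measurable).aestronglyMeasurable
    · intro K hK
      obtain ⟨C, hC⟩ := hK.exists_bound_of_continuousOn hgu.continuousOn
      obtain ⟨C', hC'⟩ := hql K hK
      refine ⟨C' * C, fun x hx => ?_⟩
      rw [norm_mul, Real.norm_eq_abs, abs_of_nonneg (hq0 x)]
      exact mul_le_mul (hC' x hx) (hC x hx) (norm_nonneg _) ((hq0 x).trans (hC' x hx))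
  have lib : LocallyIntegrable (fun x => b x * ‖gradient u x‖ ^ α) := by
    have hc : Continuous (fun x => ‖gradient u x‖ ^ α) :=
      hgr.norm.rpow_const fun x => Or.inr hα0.le
    apply loc_int
    · exact (hbm.mul hc.measurable).aestronglyMeasurable
    · intro K hK
      obtain ⟨C, hC⟩ := hK.exists_bound_of_continuousOn hc.continuousOn
      obtain ⟨C', hC'⟩ := hbl K hK
      refine ⟨C' * C, fun x hx => ?_⟩
      rw [norm_mul, Real.norm_eq_abs, abs_of_nonneg (hb0 x)]
      exact mul_le_mul (hC' x hx) (hC x hx) (norm_nonneg _) ((hb0 x).trans (hC' x hx))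
  refine ⟨hA.2, hu, hb0, fun x => mul_nonneg (hq0 x) (hg0 _ (hu0 x)), liA, lia, lib, ?_⟩
  refine weak_ext _ _ _ lia lib liA ?_
  intro φ hφ hφc hφ0
  have := hw φ hφ hφc (subset_univ _) hφ0
  simpa only [setIntegral_univ] using this

section ess
variable {n : ℕ} {F : Euc n → ℝ}

lemma isOpen_Ann (x y : ℝ) : IsOpen (Ann n x y) :=
  (isOpen_lt continuous_const continuous_norm).inter (isOpen_lt continuous_norm continuous_const)

lemma Ann_neBot (hn : 2 ≤ n) {x y : ℝ} (hx : 0 ≤ x) (hxy : x < y) :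
    (ae (volume.restrict (Ann n x y))).NeBot := by
  rw [ae_neBot]
  have : Nonempty (Fin n) := ⟨⟨0, by omega⟩⟩
  obtain ⟨z, hz⟩ : (sphere (0 : Euc n) ((x + y) / 2)).Nonempty :=
    NormedSpace.sphere_nonempty.2 (by linarith)
  have hz' : ‖z‖ = (x + y) / 2 := by simpa using hz
  have hpos : 0 < volume (Ann n x y) :=
    (isOpen_Ann x y).measure_pos volume ⟨z, by
      change x < ‖z‖ ∧ ‖z‖ < y
      constructor <;> linarith⟩
  intro h
  rw [Measure.restrict_eq_zero] at h
  exact hpos.ne' h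

lemma Ann_bdd_ge (h0 : ∀ x, 0 ≤ F x) (x y : ℝ) :
    IsBoundedUnder (· ≥ ·) (ae (volume.restrict (Ann n x y))) F :=
  isBoundedUnder_of_eventually_ge (a := 0) (Eventually.of_forall h0)

lemma Ann_bdd_le (hl : LocBdd F) (x y : ℝ) :
    IsBoundedUnder (· ≤ ·) (ae (volume.restrict (Ann n x y))) F := by
  obtain ⟨C, hC⟩ := hl _ (isCompact_closedBall (0 : Euc n) y)
  refine isBoundedUnder_of_eventually_le (a := C) ?_
  filter_upwards [ae_restrict_mem (isOpen_Ann x y).measurableSet] with z hz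
  exact hC z (by simpa using hz.2.le)

lemma Ann_cob_ge (hn : 2 ≤ n) (hl : LocBdd F) {x y : ℝ} (hx : 0 ≤ x) (hxy : x < y) :
    IsCoboundedUnder (· ≥ ·) (ae (volume.restrict (Ann n x y))) F := by
  have := Ann_neBot hn hx hxy
  exact (Ann_bdd_le hl x y).isCoboundedUnder_ge

lemma Ann_cob_le (hn : 2 ≤ n) (h0 : ∀ x, 0 ≤ F x) {x y : ℝ} (hx : 0 ≤ x) (hxy : x < y) :
    IsCoboundedUnder (· ≤ ·) (ae (volume.restrict (Ann n x y))) F := by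
  have := Ann_neBot hn hx hxy
  exact (Ann_bdd_ge h0 x y).isCoboundedUnder_le

lemma Ann_mono {x y x' y' : ℝ} (hx : x' ≤ x) (hy : y ≤ y') : Ann n x y ⊆ Ann n x' y' :=
  fun _ hz => ⟨lt_of_le_of_lt hx hz.1, lt_of_lt_of_le hz.2 hy⟩

lemma essInf_Ann_nonneg (hn : 2 ≤ n) (h0 : ∀ x, 0 ≤ F x) (hl : LocBdd F) {x y : ℝ}
    (hx : 0 ≤ x) (hxy : x < y) : 0 ≤ essInf F (volume.restrict (Ann n x y)) :=
  le_essInf_of_ae_le 0 (Eventually.of_forall h0) (Ann_cob_ge hn hl hx hxy)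

lemma essInf_Ann_mono (hn : 2 ≤ n) (h0 : ∀ x, 0 ≤ F x) (hl : LocBdd F) {x y x' y' : ℝ}
    (hx0 : 0 ≤ x) (hxy : x < y) (hx : x' ≤ x) (hy : y ≤ y') :
    essInf F (volume.restrict (Ann n x' y')) ≤ essInf F (volume.restrict (Ann n x y)) := by
  refine le_essInf_of_ae_le _ ?_ (Ann_cob_ge hn hl hx0 hxy)
  exact ae_restrict_of_ae_restrict_of_subset (Ann_mono hx hy) (ae_essInf_le (Ann_bdd_ge h0 x' y'))

lemma essSup_Ann_nonneg (hn : 2 ≤ n) (h0 : ∀ x, 0 ≤ F x) (hl : LocBdd F) {x y : ℝ}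
    (hx : 0 ≤ x) (hxy : x < y) : 0 ≤ essSup F (volume.restrict (Ann n x y)) := by
  have := Ann_neBot hn hx hxy
  obtain ⟨z, hz⟩ := (ae_le_essSup (Ann_bdd_le hl x y)).exists
  exact (h0 z).trans hz

lemma essSup_Ann_mono (hn : 2 ≤ n) (h0 : ∀ x, 0 ≤ F x) (hl : LocBdd F) {x y x' y' : ℝ}
    (hx0 : 0 ≤ x) (hxy : x < y) (hx : x' ≤ x) (hy : y ≤ y') :
    essSup F (volume.restrict (Ann n x y)) ≤ essSup F (volume.restrict (Ann n x' y')) := by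
  refine essSup_le_of_ae_le _ ?_ (Ann_cob_le hn h0 hx0 hxy)
  exact ae_restrict_of_ae_restrict_of_subset (Ann_mono hx hy) (ae_le_essSup (Ann_bdd_le hl x' y'))

lemma locBdd_rpow (h0 : ∀ x, 0 ≤ F x) (hl : LocBdd F) {e : ℝ} (he : 0 ≤ e) :
    LocBdd (fun x => F x ^ e) := by
  intro K hK
  obtain ⟨C, hC⟩ := hl K hK
  exact ⟨C ^ e, fun x hx => Real.rpow_le_rpow (h0 x) (hC x hx) he⟩

end ess

lemma setInt_upper {f : ℝ → ℝ} {x y c : ℝ} (hxy : x ≤ y)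
    (h : ∀ t ∈ Ioc x y, 0 ≤ f t ∧ f t ≤ c) : ∫ t in Ioc x y, f t ≤ c * (y - x) := by
  have h1 := norm_setIntegral_le_of_norm_le_const (μ := volume) (s := Ioc x y) (f := f) (C := c)
    (by simp) (fun t ht => by
      rw [Real.norm_eq_abs, abs_of_nonneg (h t ht).1]; exact (h t ht).2)
  have h2 : volume.real (Ioc x y) = y - x := by simp [measureReal_def, hxy]
  rw [h2] at h1
  exact (le_abs_self _).trans h1

lemma f_bound {p α ξ q Q β β' : ℝ} (hp : 1 < p) (hα₁ : p - 1 ≤ α) (hξ : 0 < ξ)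
    (hq : 0 ≤ q) (hqQ : q ≤ Q) (hβ : 0 < β) (hββ : β ≤ β') :
    0 ≤ (ξ * (q / (1 + ξ * q ^ ((α - p + 1) / α) * β'))) ^ (1 / (p - 1)) ∧
    (ξ * (q / (1 + ξ * q ^ ((α - p + 1) / α) * β'))) ^ (1 / (p - 1)) ≤
      (Q / β ^ (α / (p - 1))) ^ (1 / α) := by
  have hβ' : 0 < β' := by linarith
  have hα0 : 0 < α := by linarith
  have hp1 : 0 < p - 1 := by linarith
  have hQ : 0 ≤ Q := hq.trans hqQ
  refine ⟨by positivity, ?_⟩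
  have e1 : (Q / β ^ (α / (p - 1))) ^ (1 / α) = (Q ^ ((p - 1) / α) / β) ^ (1 / (p - 1)) := by
    rw [Real.div_rpow hQ (by positivity), Real.div_rpow (by positivity) hβ.le,
      ← Real.rpow_mul hβ.le, ← Real.rpow_mul hQ]
    congr 2
    · field_simp
    · field_simp
  rw [e1]
  apply Real.rpow_le_rpow (by positivity) _ (by positivity)
  rcases hq.eq_or_lt with h | h
  · rw [← h]; simp; positivity
  · have hs : 0 < q ^ ((α - p + 1) / α) := by positivity
    calc ξ * (q / (1 + ξ * q ^ ((α - p + 1) / α) * β'))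
        ≤ ξ * (q / (ξ * q ^ ((α - p + 1) / α) * β')) := by gcongr; linarith
      _ = q / q ^ ((α - p + 1) / α) / β' := by field_simp
      _ = q ^ ((p - 1) / α) / β' := by
          congr 1
          nth_rewrite 1 [← Real.rpow_one q]
          rw [← Real.rpow_sub h]; congr 1; field_simp; ring
      _ ≤ Q ^ ((p - 1) / α) / β := by gcongr


/-- Lemma 3.3: dichotomy estimate on annuli `r₂ ≤ τ r₁` when `M` grows at least by the
factor `η^{1/2}`. -/
theorem stmt_6 (n : ℕ) (hn : 2 ≤ n) (p C₁ C₂ α : ℝ) (hp : 1 < p)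
    (hC₁ : 0 < C₁) (hC₂ : 0 < C₂) (hα₁ : p - 1 ≤ α) (hα₂ : α ≤ p)
    (η : ℝ) (hη : 1 < η) :
    ∃ C : ℝ, 0 < C ∧
      ∀ (A : Euc n → Euc n → Euc n), StructCond A p C₁ C₂ →
      ∀ (b : Euc n → ℝ), Measurable b → (∀ x, 0 ≤ b x) → LocBdd b →
      ∀ (q : Euc n → ℝ), Measurable q → (∀ x, 0 ≤ q x) → LocBdd q →
      ∀ (g : ℝ → ℝ), ContinuousOn g (Set.Ici 0) → (∀ t ∈ Set.Ici (0 : ℝ), 0 ≤ g t) →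
        (∀ t : ℝ, 0 < t → 0 < g t) →
      ∀ u : Euc n → ℝ, ContDiff ℝ 1 u → (∀ x, 0 ≤ u x) →
        IsWeakSol A b α (fun x => q x * g (u x)) Set.univ u →
      ∀ τ r₁ r₂ : ℝ, 1 < τ → 0 < r₁ → r₁ < r₂ → r₂ ≤ τ * r₁ →
        0 < sphMax u r₁ → sphMax u r₁ ≤ η ^ (-(1 / 2 : ℝ)) * sphMax u r₂ →
        (C * ∫ ξ in Set.Ioc r₁ r₂, qinf q τ ξ ^ (1 / p)) ≤
            ∫ t in Set.Ioc (sphMax u r₁) (sphMax u r₂), (ginf g η t * t) ^ (-(1 / p)) ∨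
          (C * ∫ ξ in Set.Ioc r₁ r₂, (ξ * fdef q b p α τ ξ) ^ (1 / (p - 1))) ≤
            ∫ t in Set.Ioc (sphMax u r₁) (sphMax u r₂), ginf g η t ^ (-(1 / α)) := by
  obtain ⟨σ, hσ, hση⟩ : ∃ σ : ℝ, 1 < σ ∧ σ ^ 2 = η :=
    ⟨√η, by rw [Real.lt_sqrt (by norm_num)]; simpa using hη, Real.sq_sqrt (by linarith)⟩
  obtain ⟨L, hL, hLσ⟩ : ∃ L : ℝ, 1 < L ∧ L ^ 2 = σ :=
    ⟨√σ, by rw [Real.lt_sqrt (by norm_num)]; simpa using hσ, Real.sq_sqrt (by linarith)⟩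
  obtain ⟨K, hK, hstep⟩ := stepint hn hp hC₁ hC₂ hα₁ hα₂ hσ hL hση
  refine ⟨1 / (2 * K), by positivity, ?_⟩
  intro A hA b hbm hb0 hbl q hqm hq0 hql g hgc hg0 hgp u hu hu0 hw τ r₁ r₂ hτ hr₁ hr hrτ hM1 hM2
  have hα0 : 0 < α := by linarith
  have hp0 : 0 < p := by linarith
  have hp1 : 0 < p - 1 := by linarith
  have hD := mkDat hp hC₂ hα₁ hA hbm hb0 hbl hqm hq0 hql hgc hg0 hu hu0 hw
  have huc := hu.continuous
  have hmp : ∀ r : ℝ, 0 < r → ∀ x : Euc n, ‖x‖ ≤ r → u x ≤ sphMax u r :=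
    fun r hr x hx => maxprin hn hp hC₁ hC₂ hα₁ hα₂ hD hbl hr hx
  have hmono := sphMax_mono hn huc hmp
  have hpos : ∀ s ∈ Icc r₁ r₂, 0 < sphMax u s := fun s hs =>
    lt_of_lt_of_le hM1 (hmono (show r₁ ∈ Ioi 0 from hr₁)
      (show s ∈ Ioi 0 from lt_of_lt_of_le hr₁ hs.1) hs.1)
  have hσM : σ * sphMax u r₁ ≤ sphMax u r₂ := by
    have e : η ^ (-(1 / 2 : ℝ)) = σ⁻¹ := by
      rw [← hση, ← Real.rpow_natCast, ← Real.rpow_mul (by linarith)]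
      norm_num [Real.rpow_neg_one]
    rw [e, inv_mul_eq_div, le_div_iff₀ (by linarith)] at hM2
    linarith
  have hLM : L * sphMax u r₁ ≤ sphMax u r₂ := by
    refine le_trans ?_ hσM
    have : L ≤ σ := by rw [← hLσ]; nlinarith
    gcongr
  have hM12 : sphMax u r₁ ≤ sphMax u r₂ := by nlinarith
  set I := ∫ t in Set.Ioc (sphMax u r₁) (sphMax u r₂), (ginf g η t * t) ^ (-(1 / p)) with hI
  set J := ∫ t in Set.Ioc (sphMax u r₁) (sphMax u r₂), ginf g η t ^ (-(1 / α)) with hJ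
  have hg00 : ∀ t, 0 < t → 0 ≤ ginf g η t := fun t ht => le_ginf hη ht fun x hx =>
    hg0 x (le_of_lt (lt_of_le_of_lt (by positivity) hx.1))
  have hI0 : 0 ≤ I := setIntegral_nonneg measurableSet_Ioc fun t ht =>
    Real.rpow_nonneg (mul_nonneg (hg00 t (hM1.trans ht.1)) (hM1.trans ht.1).le) _
  have hJ0 : 0 ≤ J := setIntegral_nonneg measurableSet_Ioc fun t ht =>
    Real.rpow_nonneg (hg00 t (hM1.trans ht.1)) _
  have hbe0 : ∀ x, 0 ≤ b x ^ ((p - 1) / α) := fun x => Real.rpow_nonneg (hb0 x) _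
  have hbel : LocBdd (fun x => b x ^ ((p - 1) / α)) := locBdd_rpow hb0 hbl (by positivity)
  set Q := essInf q (volume.restrict (Ann n r₁ r₂)) with hQ
  set β := essSup (fun x => b x ^ ((p - 1) / α)) (volume.restrict (Ann n r₁ r₂)) with hβ
  have hβ0 : 0 ≤ β := essSup_Ann_nonneg hn hbe0 hbel hr₁.le hr
  have hQ0 : 0 ≤ Q := essInf_Ann_nonneg hn hq0 hql hr₁.le hr
  have hgeo : ∀ ξ ∈ Ioc r₁ r₂, 0 < ξ ∧ ξ / τ ≤ r₁ ∧ r₂ ≤ τ * ξ := by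
    intro ξ hξ
    have h0 : 0 < ξ := hr₁.trans hξ.1
    refine ⟨h0, ?_, ?_⟩
    · rw [div_le_iff₀ (by linarith)]
      linarith [hξ.2]
    · nlinarith [hξ.1]
  have hqξ : ∀ ξ ∈ Ioc r₁ r₂, 0 ≤ qinf q τ ξ ∧ qinf q τ ξ ≤ Q := by
    intro ξ hξ
    obtain ⟨h0, h1, h2⟩ := hgeo ξ hξ
    refine ⟨essInf_Ann_nonneg hn hq0 hql (by positivity) ?_, ?_⟩
    · linarith
    · exact essInf_Ann_mono hn hq0 hql hr₁.le hr h1 h2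
  have hi : ∫ ξ in Set.Ioc r₁ r₂, qinf q τ ξ ^ (1 / p) ≤ Q ^ (1 / p) * (r₂ - r₁) :=
    setInt_upper hr.le fun ξ hξ => ⟨Real.rpow_nonneg (hqξ ξ hξ).1 _,
      Real.rpow_le_rpow (hqξ ξ hξ).1 (hqξ ξ hξ).2 (by positivity)⟩
  rcases hQ0.eq_or_lt with hQz | hQp
  · left
    rw [← hQz, Real.zero_rpow (by positivity), zero_mul] at hi
    exact (mul_nonpos_of_nonneg_of_nonpos (by positivity) hi).trans hI0
  set B := β ^ (α / (p - 1)) with hB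
  have hB0 : 0 ≤ B := Real.rpow_nonneg hβ0 _
  have hQae : ∀ᵐ x : Euc n, r₁ < ‖x‖ → ‖x‖ < r₂ → Q ≤ q x := by
    have := ae_essInf_le (Ann_bdd_ge hq0 r₁ r₂)
    rw [ae_restrict_iff' (isOpen_Ann r₁ r₂).measurableSet] at this
    filter_upwards [this] with x hx h1 h2
    exact hx ⟨h1, h2⟩
  have hBae : ∀ᵐ x : Euc n, r₁ < ‖x‖ → ‖x‖ < r₂ → b x ≤ B := by
    have := ae_le_essSup (Ann_bdd_le hbel r₁ r₂)
    rw [ae_restrict_iff' (isOpen_Ann r₁ r₂).measurableSet] at this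
    filter_upwards [this] with x hx h1 h2
    have h3 : b x ^ ((p - 1) / α) ≤ β := hx ⟨h1, h2⟩
    have h4 := Real.rpow_le_rpow (hbe0 x) h3 (show 0 ≤ α / (p - 1) by positivity)
    rw [← Real.rpow_mul (hb0 x)] at h4
    have e : (p - 1) / α * (α / (p - 1)) = 1 := by field_simp
    rw [e, Real.rpow_one] at h4
    exact h4
  set Φ₁ : ℝ → ℝ := fun t => (ginf g η t * t) ^ (-(1 / p)) with hΦ₁
  set Φ₂ : ℝ → ℝ := fun t => ginf g η t ^ (-(1 / α)) with hΦ₂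
  have i1 : ∀ x y : ℝ, 0 < x → IntegrableOn Φ₁ (Ioc x y) := fun x y hx =>
    int_phi1 hη hgc hg0 hgp hp0 hx
  have i2 : ∀ x y : ℝ, 0 < x → IntegrableOn Φ₂ (Ioc x y) := fun x y hx =>
    int_phi2 hη hgc hg0 hgp hα0 hx
  set c1 := Q ^ (-(1 / p)) with hc1
  set c2 := (B / Q) ^ (1 / α) with hc2
  set Ψ : ℝ → ℝ := fun y => K * (c1 * Φ₁ y + c2 * Φ₂ y) with hΨ
  have iΨ : ∀ x y : ℝ, 0 < x → IntegrableOn Ψ (Ioc x y) := fun x y hx =>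
    (((i1 x y hx).const_mul c1).add ((i2 x y hx).const_mul c2)).const_mul K
  have eΨ : ∀ x y : ℝ, 0 < x → ∫ t in Ioc x y, Ψ t =
      K * (c1 * (∫ t in Ioc x y, Φ₁ t) + c2 * ∫ t in Ioc x y, Φ₂ t) := by
    intro x y hx
    rw [hΨ]
    rw [integral_const_mul, integral_add ((i1 x y hx).const_mul c1) ((i2 x y hx).const_mul c2),
      integral_const_mul, integral_const_mul]
  have main : r₂ - r₁ ≤ K * (c1 * I + c2 * J) := by
    obtain ⟨k, hk⟩ := pow_unbounded_of_one_lt (sphMax u r₂ / sphMax u r₁) hL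
    have := sumlemma (M := sphMax u) (Ψ := Ψ) hL (sphMax_cont (t := r₂) hn huc hr₁) hpos iΨ ?_ k
      r₁ ⟨le_rfl, hr.le⟩ r₂ ⟨hr.le, le_rfl⟩ hr hLM ?_
    · rwa [eΨ _ _ hM1] at this
    · intro s hs t ht hst h1 h2
      rw [eΨ _ _ (hpos s hs)]
      refine hstep A b q u g hD hu0 hgc hg0 hgp hmp s t B Q (lt_of_lt_of_le hr₁ hs.1) hst
        (hpos s hs) h1 (by rwa [← hLσ]) hB0 hQp ?_ ?_
      · filter_upwards [hBae] with x hx h1 h2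
        exact hx (lt_of_le_of_lt hs.1 h1) (lt_of_lt_of_le h2 ht.2)
      · filter_upwards [hQae] with x hx h1 h2
        exact hx (lt_of_le_of_lt hs.1 h1) (lt_of_lt_of_le h2 ht.2)
    · rw [div_lt_iff₀ hM1] at hk
      refine hk.le.trans ?_
      gcongr
      · exact hL.le
      · omega
  rcases le_total ((r₂ - r₁) / 2) (K * (c1 * I)) with hcase | hcase
  · left
    have e : Q ^ (1 / p) * c1 = 1 := by
      rw [hc1, ← Real.rpow_add hQp]; simp
    have h1 : Q ^ (1 / p) * (r₂ - r₁) ≤ Q ^ (1 / p) * (2 * (K * (c1 * I))) := by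
      gcongr; linarith
    have h2 : Q ^ (1 / p) * (2 * (K * (c1 * I))) = 2 * K * I := by
      calc _ = (Q ^ (1 / p) * c1) * (2 * K * I) := by ring
        _ = _ := by rw [e, one_mul]
    rw [div_mul_eq_mul_div, one_mul, div_le_iff₀ (by positivity)]
    linarith
  · right
    have hcase2 : (r₂ - r₁) / 2 ≤ K * (c2 * J) := by linarith
    have hβp : 0 < β := by
      rcases hβ0.eq_or_lt with h | h
      · exfalso
        have hBz : B = 0 := by rw [hB, ← h, Real.zero_rpow (by positivity)]
        have hcz : c2 = 0 := by rw [hc2, hBz, zero_div, Real.zero_rpow (by positivity)]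
        rw [hcz, zero_mul, mul_zero] at hcase2
        linarith
      · exact h
    have hBp : 0 < B := Real.rpow_pos_of_pos hβp _
    have e : (Q / B) ^ (1 / α) * c2 = 1 := by
      rw [hc2, ← Real.mul_rpow (by positivity) (by positivity)]
      have : Q / B * (B / Q) = 1 := by field_simp
      rw [this, Real.one_rpow]
    have h0 : ∫ ξ in Set.Ioc r₁ r₂, (ξ * fdef q b p α τ ξ) ^ (1 / (p - 1)) ≤
        (Q / B) ^ (1 / α) * (r₂ - r₁) := by
      refine setInt_upper hr.le fun ξ hξ => ?_
      obtain ⟨g0, g1, g2⟩ := hgeo ξ hξ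
      exact f_bound hp hα₁ g0 (hqξ ξ hξ).1 (hqξ ξ hξ).2 hβp
        (essSup_Ann_mono hn hbe0 hbel hr₁.le hr g1 g2)
    have h1 : (Q / B) ^ (1 / α) * (r₂ - r₁) ≤ (Q / B) ^ (1 / α) * (2 * (K * (c2 * J))) := by
      gcongr; linarith
    have h2 : (Q / B) ^ (1 / α) * (2 * (K * (c2 * J))) = 2 * K * J := by
      calc _ = ((Q / B) ^ (1 / α) * c2) * (2 * K * J) := by ring
        _ = _ := by rw [e, one_mul]
    rw [div_mul_eq_mul_div, one_mul, div_le_iff₀ (by positivity)]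
    linarith
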